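/- arXiv:1302.1631 — 9 statements merged into one kernel-verified Lean document; each statement's English description precedes it below -/
import Mathlib

section
/- Let A, B ∈ SL₂(ℂ) with tr(A) = tr(B) = x and tr(AB) = z, and let n be a positive integer. Then tr((AB)^n·(BA)^{−n}) = 2 + (z−2)(z+2−x²)·S_{n−1}(z)². -/
theorem aux_pow (S : ℤ → ℂ → ℂ)
    (hS0 : ∀ z : ℂ, S 0 z = 1)
    (hS1 : ∀ z : ℂ, S 1 z = z)
    (hSrec : ∀ (j : ℤ) (z : ℂ), S (j + 1) z = z * S j z - S (j - 1) z)
    (M : Matrix (Fin 2) (Fin 2) ℂ) (z : ℂ) (hd : M.det = 1) (ht : M.trace = z) (m : ℕ) :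
    M ^ (m + 1) = S m z • M - S ((m : ℤ) - 1) z • (1 : Matrix (Fin 2) (Fin 2) ℂ) := by
  have hneg : S (-1) z = 0 := by
    have := hSrec 0 z
    simp [hS0, hS1] at this
    linear_combination this
  have hsq : M * M = z • M - (1 : Matrix (Fin 2) (Fin 2) ℂ) := by
    rw [Matrix.det_fin_two] at hd
    rw [Matrix.trace_fin_two] at ht
    subst ht
    ext i j
    fin_cases i <;> fin_cases j <;> simp [Matrix.mul_apply, Fin.sum_univ_two] <;>
      first | ring1 | linear_combination (-1 : ℂ) * hd
  induction m with
  | zero => simp [hS0, hneg]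
  | succ k ih =>
    rw [pow_succ, ih, sub_mul, smul_mul_assoc, smul_mul_assoc, hsq, one_mul]
    have := hSrec k z
    push_cast
    rw [this, add_sub_cancel_right]
    module

theorem aux_quad (S : ℤ → ℂ → ℂ)
    (hS0 : ∀ z : ℂ, S 0 z = 1)
    (hS1 : ∀ z : ℂ, S 1 z = z)
    (hSrec : ∀ (j : ℤ) (z : ℂ), S (j + 1) z = z * S j z - S (j - 1) z)
    (z : ℂ) (m : ℕ) :
    S m z ^ 2 + S ((m : ℤ) - 1) z ^ 2 - z * S m z * S ((m : ℤ) - 1) z = 1 := by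
  have hneg : S (-1) z = 0 := by
    have := hSrec 0 z
    simp [hS0, hS1] at this
    linear_combination this
  induction m with
  | zero => simp [hS0, hneg]
  | succ k ih =>
    have := hSrec k z
    push_cast
    rw [this, add_sub_cancel_right]
    linear_combination ih

/-- For `A, B ∈ SL₂(ℂ)` with `tr A = tr B = x`,
`tr (A * B) = z`, and a positive integer `n`, one has
`tr ((A*B)^n * (B*A)^(-n)) = 2 + (z - 2) * (z + 2 - x²) * S (n-1) z ^ 2`,
where the `S j` are the Chebyshev-like polynomials with `S 0 = 1`, `S 1 = z`
and `S (j+1) = z * S j - S (j-1)`. -/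
theorem trace_ABn_BAn_SL2
    (S : ℤ → ℂ → ℂ)
    (hS0 : ∀ z : ℂ, S 0 z = 1)
    (hS1 : ∀ z : ℂ, S 1 z = z)
    (hSrec : ∀ (j : ℤ) (z : ℂ), S (j + 1) z = z * S j z - S (j - 1) z)
    (A B : Matrix.SpecialLinearGroup (Fin 2) ℂ) (x z : ℂ)
    (hA : Matrix.trace (A : Matrix (Fin 2) (Fin 2) ℂ) = x)
    (hB : Matrix.trace (B : Matrix (Fin 2) (Fin 2) ℂ) = x)
    (hAB : Matrix.trace ((A * B : Matrix.SpecialLinearGroup (Fin 2) ℂ) : Matrix (Fin 2) (Fin 2) ℂ) = z)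
    (n : ℕ) (hn : 1 ≤ n) :
    Matrix.trace
      (((A * B) ^ (n : ℤ) * (B * A) ^ (-(n : ℤ)) :
          Matrix.SpecialLinearGroup (Fin 2) ℂ) : Matrix (Fin 2) (Fin 2) ℂ)
      = 2 + (z - 2) * (z + 2 - x ^ 2) * S ((n : ℤ) - 1) z ^ 2 := by
  obtain ⟨m, rfl⟩ : ∃ m, n = m + 1 := ⟨n - 1, by omega⟩
  have hBA : Matrix.trace ((B * A : Matrix.SpecialLinearGroup (Fin 2) ℂ) :
      Matrix (Fin 2) (Fin 2) ℂ) = z := by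
    rw [← hAB, Matrix.SpecialLinearGroup.coe_mul, Matrix.SpecialLinearGroup.coe_mul,
      Matrix.trace_mul_comm]
  have h1 := aux_pow S hS0 hS1 hSrec _ z (A * B).2 hAB m
  have h2 := aux_pow S hS0 hS1 hSrec _ z (B * A).2 hBA m
  have hq := aux_quad S hS0 hS1 hSrec z m
  rw [zpow_neg, zpow_natCast, zpow_natCast, Matrix.SpecialLinearGroup.coe_mul,
    Matrix.SpecialLinearGroup.coe_inv, Matrix.SpecialLinearGroup.coe_pow,
    Matrix.SpecialLinearGroup.coe_pow, h1, h2]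
  have e : ((m + 1 : ℕ) : ℤ) - 1 = m := by push_cast; ring
  rw [e]
  generalize S m z = s at *
  generalize S ((m : ℤ) - 1) z = t at *
  clear h1 h2 hS0 hS1 hSrec e
  have dA := A.2
  have dB := B.2
  rw [Matrix.SpecialLinearGroup.coe_mul] at *
  rw [Matrix.SpecialLinearGroup.coe_mul] at *
  generalize (A : Matrix (Fin 2) (Fin 2) ℂ) = P at *
  generalize (B : Matrix (Fin 2) (Fin 2) ℂ) = Q at *
  rw [Matrix.det_fin_two] at dA dB
  simp only [Matrix.trace_fin_two, Matrix.adjugate_fin_two, Matrix.mul_apply, Fin.sum_univ_two,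
    Matrix.sub_apply, Matrix.smul_apply, Matrix.one_apply, smul_eq_mul] at *
  simp
  generalize P 0 0 = a at *
  generalize P 0 1 = b at *
  generalize P 1 0 = c at *
  generalize P 1 1 = d at *
  generalize Q 0 0 = e at *
  generalize Q 0 1 = f at *
  generalize Q 1 0 = g at *
  generalize Q 1 1 = h at *
  have hK : (a * e + b * g) * (g * b + h * d) - (a * f + b * h) * (g * a + h * c)
      - (c * e + d * g) * (e * b + f * d) + (c * f + d * h) * (e * a + f * c)
      = 2 + (z - 2) * (z + 2 - x ^ 2) := by
    have hx1 : x ^ 2 = (a + d) ^ 2 := by rw [hA]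
    have hx2 : x ^ 2 = (e + h) ^ 2 := by rw [hB]
    have hx3 : x ^ 2 = (a + d) * (e + h) := by rw [hA, hB]; ring
    have hr : 2 + (z - 2) * (z + 2 - x ^ 2)
        = (a + d) ^ 2 + (e + h) ^ 2 + z ^ 2 - (a + d) * (e + h) * z - 2 := by
      linear_combination hx1 + hx2 - z * hx3
    rw [hr, ← hAB]
    linear_combination (a + d) ^ 2 * dB + (e + h) ^ 2 * dA - 2 * (e * h - f * g) * dA - 2 * dB
  linear_combination s ^ 2 * hK + 2 * hq - s * t * hAB - s * t * hBA
end

section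
/- Let n be a positive integer and let h₁(z) = S_{3n}(z) − S_{3n−1}(z) − (4 + (z²−4)·S_{n−1}(z)²)·(S_n(z) − S_{n−1}(z)). Then h₁ is a polynomial in z of degree n, it has exactly n distinct complex roots (i.e., h₁ has no multiple roots), and none of its roots equals 2 or −2. -/
open Polynomial

lemma hh_add (S : ℤ → ℂ[X]) (hS0 : S 0 = 1) (hS1 : S 1 = X)
    (hSrec : ∀ j : ℤ, S (j + 1) = X * S j - S (j - 1)) (m : ℤ) (k : ℕ) :
    S (m + k) = S m * S k - S (m - 1) * S (k - 1) ∧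
    S (m + k + 1) = S m * S (k + 1) - S (m - 1) * S k := by
  have hm1 : S (-1) = 0 := by
    have := hSrec 0
    simp only [zero_add, zero_sub, hS0, hS1, mul_one] at this
    linear_combination this
  induction k with
  | zero =>
    have := hSrec m
    simp [hS0, hS1, hm1]
    linear_combination this
  | succ k ih =>
    obtain ⟨h1, h2⟩ := ih
    push_cast
    have e1 : m + ((k : ℤ) + 1) = m + k + 1 := by ring
    have e2 : (k : ℤ) + 1 - 1 = k := by ring
    have e3 : m + (k : ℤ) + 1 - 1 = m + k := by ring
    rw [e1, e2]
    refine ⟨h2, ?_⟩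
    have a1 := hSrec (m + k + 1)
    have a2 := hSrec (k + 1)
    have a3 := hSrec k
    rw [e3] at a1
    rw [e2] at a2
    rw [a1, a2, h1, h2, a3]
    ring

lemma hh_quad (S : ℤ → ℂ[X]) (hS0 : S 0 = 1) (hS1 : S 1 = X)
    (hSrec : ∀ j : ℤ, S (j + 1) = X * S j - S (j - 1)) (k : ℕ) :
    S k ^ 2 + S (k - 1) ^ 2 - X * S k * S (k - 1) = 1 := by
  have hm1 : S (-1) = 0 := by
    have := hSrec 0
    simp only [zero_add, zero_sub, hS0, hS1, mul_one] at this
    linear_combination this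
  induction k with
  | zero => simp [hS0, hm1]
  | succ k ih =>
    push_cast
    rw [add_sub_cancel_right, hSrec k]
    linear_combination ih

lemma hh_id (S : ℤ → ℂ[X]) (hS0 : S 0 = 1) (hS1 : S 1 = X)
    (hSrec : ∀ j : ℤ, S (j + 1) = X * S j - S (j - 1)) (n : ℕ) :
    S (3 * ((n + 1 : ℕ) : ℤ)) - S (3 * ((n + 1 : ℕ) : ℤ) - 1)
        - (4 + (X ^ 2 - 4) * S (((n + 1 : ℕ) : ℤ) - 1) ^ 2)
          * (S ((n + 1 : ℕ) : ℤ) - S (((n + 1 : ℕ) : ℤ) - 1))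
      = -(2 * (S (n + 1) - S n) + (S n - S (n - 1))) := by
  have q := hh_quad S hS0 hS1 hSrec (n + 1)
  have b1 := (hh_add S hS0 hS1 hSrec (n + 1) (n + 1)).1
  have b2 := (hh_add S hS0 hS1 hSrec (n + 1) n).1
  have b3 := (hh_add S hS0 hS1 hSrec (2 * (n + 1)) (n + 1)).1
  have b4 := (hh_add S hS0 hS1 hSrec (2 * (n + 1)) n).1
  have r := hSrec n
  push_cast at *
  have e1 : (n : ℤ) + 1 + (n + 1) = 2 * (n + 1) := by ring
  have e2 : (n : ℤ) + 1 + n = 2 * (n + 1) - 1 := by ring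
  have e3 : (2 : ℤ) * (n + 1) + (n + 1) = 3 * (n + 1) := by ring
  have e4 : (2 : ℤ) * (n + 1) + n = 3 * (n + 1) - 1 := by ring
  have e5 : (n : ℤ) + 1 - 1 = n := by ring
  rw [e1, e5] at b1
  rw [e2, e5] at b2
  rw [e3, e5] at b3
  rw [e4] at b4
  rw [e5] at q ⊢
  rw [b3, b4, b2, b1]
  have r' : S ((n : ℤ) - 1) = X * S n - S (n + 1) := by linear_combination r
  rw [r']
  linear_combination (S (n + 1) - 3 * S n + X * S n) * q

lemma hh_main (V : ℕ → ℂ[X]) (h0 : V 0 = 1) (h1 : V 1 = X - 1)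
    (hr : ∀ k, V (k + 2) = X * V (k + 1) - V k) (n : ℕ) (x : ℂ)
    (hx : (2 * V (n + 1) + V n).eval x = 0) :
    (derivative (2 * V (n + 1) + V n)).eval x ≠ 0 := by
  have cd : ∀ (n : ℕ) (x y : ℂ), (x - y) * ∑ k ∈ Finset.range (n + 1), (V k).eval x * (V k).eval y
      = (V (n + 1)).eval x * (V n).eval y - (V n).eval x * (V (n + 1)).eval y := by
    intro n x y
    induction n with
    | zero => simp [h0, h1]
    | succ n ih =>
      rw [Finset.sum_range_succ, mul_add, ih, hr n]
      simp only [eval_sub, eval_mul, eval_X]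
      ring
  have cd' : ∀ (n : ℕ), ∑ k ∈ Finset.range (n + 1), (V k) ^ 2
      = derivative (V (n + 1)) * V n - derivative (V n) * V (n + 1) := by
    intro n
    induction n with
    | zero => simp [h0, h1]
    | succ n ih =>
      rw [Finset.sum_range_succ, ih, hr n]
      simp only [derivative_sub, derivative_mul, derivative_X]
      ring
  have hconj : ∀ (n : ℕ) (x : ℂ), (V n).eval (starRingEnd ℂ x) = starRingEnd ℂ ((V n).eval x) ∧
      (V (n + 1)).eval (starRingEnd ℂ x) = starRingEnd ℂ ((V (n + 1)).eval x) := by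
    intro n x
    induction n with
    | zero => simp [h0, h1]
    | succ n ih =>
      refine ⟨ih.2, ?_⟩
      rw [hr n]
      simp only [eval_sub, eval_mul, eval_X, map_sub, map_mul, ih.1, ih.2]
  have hx' : (V n).eval x = -2 * (V (n + 1)).eval x := by
    simp only [eval_add, eval_mul, eval_ofNat] at hx
    linear_combination hx
  have pos : (0 : ℝ) < ∑ k ∈ Finset.range (n + 1), Complex.normSq ((V k).eval x) := by
    apply Finset.sum_pos' (fun i _ => Complex.normSq_nonneg _)
    exact ⟨0, by simp, by simp [h0]⟩
  have hsum : ∑ k ∈ Finset.range (n + 1), (V k).eval x * (V k).eval (starRingEnd ℂ x) ≠ 0 := by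
    have : ∑ k ∈ Finset.range (n + 1), (V k).eval x * (V k).eval (starRingEnd ℂ x)
        = ((∑ k ∈ Finset.range (n + 1), Complex.normSq ((V k).eval x) : ℝ) : ℂ) := by
      push_cast
      refine Finset.sum_congr rfl fun k _ => ?_
      rw [(hconj k x).1, Complex.mul_conj]
    rw [this]
    exact_mod_cast pos.ne'
  have hreal : starRingEnd ℂ x = x := by
    have := cd n x (starRingEnd ℂ x)
    rw [(hconj n x).1, (hconj n x).2, hx'] at this
    simp only [map_mul, map_neg, map_ofNat] at this
    have h2 : (x - starRingEnd ℂ x) * ∑ k ∈ Finset.range (n + 1),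
        (V k).eval x * (V k).eval (starRingEnd ℂ x) = 0 := by
      rw [this]; ring
    rcases mul_eq_zero.1 h2 with h | h
    · exact (sub_eq_zero.1 h).symm
    · exact absurd h hsum
  intro hd
  apply hsum
  rw [hreal]
  have := congrArg (eval x) (cd' n)
  simp only [eval_finsetSum, eval_pow, eval_sub, eval_mul] at this
  simp only [derivative_add, derivative_mul, derivative_ofNat, eval_add, eval_mul, eval_ofNat,
    zero_mul, zero_add] at hd
  simp only [← pow_two]
  rw [this, hx']
  linear_combination (-(V (n + 1)).eval x) * hd

lemma hh_deg (V : ℕ → ℂ[X]) (h0 : V 0 = 1) (h1 : V 1 = X - 1)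
    (hr : ∀ k, V (k + 2) = X * V (k + 1) - V k) (n : ℕ) :
    (V n).degree = n ∧ (V (n + 1)).degree = (n + 1 : ℕ) := by
  induction n with
  | zero =>
    refine ⟨by simp [h0], ?_⟩
    rw [h1]
    simpa using degree_X_sub_C (1 : ℂ)
  | succ n ih =>
    refine ⟨ih.2, ?_⟩
    have : (X * V (n + 1)).degree = ((n + 2 : ℕ) : WithBot ℕ) := by
      rw [degree_mul, degree_X, ih.2]; norm_cast; omega
    rw [hr n, degree_sub_eq_left_of_degree_lt, this]
    rw [this, ih.1]
    norm_cast; omega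

/-- For a positive integer `n`, the polynomial
`h₁ = S (3n) - S (3n-1) - (4 + (X² - 4) * S (n-1) ^ 2) * (S n - S (n-1))`
(where the `S j` are the Chebyshev-like polynomials with `S 0 = 1`, `S 1 = X`
and `S (j+1) = X * S j - S (j-1)`) has degree `n`, has no multiple roots,
has exactly `n` distinct complex roots, and none of its roots equals `2` or
`-2`. -/
theorem h1_distinct_roots
    (S : ℤ → Polynomial ℂ)
    (hS0 : S 0 = 1)
    (hS1 : S 1 = Polynomial.X)
    (hSrec : ∀ j : ℤ, S (j + 1) = Polynomial.X * S j - S (j - 1))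
    (n : ℕ) (hn : 1 ≤ n)
    (h₁ : Polynomial ℂ)
    (hh₁ : h₁ = S (3 * (n : ℤ)) - S (3 * (n : ℤ) - 1)
        - (4 + (Polynomial.X ^ 2 - 4) * S ((n : ℤ) - 1) ^ 2)
          * (S (n : ℤ) - S ((n : ℤ) - 1))) :
    h₁.degree = n ∧ Squarefree h₁ ∧ h₁.roots.toFinset.card = n ∧
      ∀ z : ℂ, h₁.eval z = 0 → z ≠ 2 ∧ z ≠ -2 := by
  obtain ⟨m, rfl⟩ : ∃ m, n = m + 1 := ⟨n - 1, by omega⟩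
  rw [hh_id S hS0 hS1 hSrec m] at hh₁
  have hm1 : S (-1) = 0 := by
    have := hSrec 0
    simp only [zero_add, zero_sub, hS0, hS1, mul_one] at this
    linear_combination this
  obtain ⟨V, hV⟩ : ∃ V : ℕ → ℂ[X], ∀ k : ℕ, V k = S k - S (k - 1) := ⟨_, fun _ => rfl⟩
  have h0 : V 0 = 1 := by simp [hV, hS0, hm1]
  have h1 : V 1 = X - 1 := by simp [hV, hS0, hS1]
  have hr : ∀ k, V (k + 2) = X * V (k + 1) - V k := by
    intro k
    have a1 := hSrec (k + 1)
    have a2 := hSrec k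
    have e1 : (k : ℤ) + 1 + 1 = k + 2 := by ring
    have e2 : (k : ℤ) + 2 - 1 = k + 1 := by ring
    rw [e1, add_sub_cancel_right] at a1
    simp only [hV]
    push_cast
    rw [e2, add_sub_cancel_right]
    linear_combination a1 - a2
  have hh : h₁ = -(2 * V (m + 1) + V m) := by
    rw [hh₁]; simp [hV]
  have hdeg : h₁.degree = (m + 1 : ℕ) := by
    have d := hh_deg V h0 h1 hr m
    have d2 : (2 * V (m + 1)).degree = (m + 1 : ℕ) := by
      rw [show (2 : ℂ[X]) = C 2 from rfl, degree_C_mul (by norm_num), d.2]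
    rw [hh, degree_neg, degree_add_eq_left_of_degree_lt, d2]
    rw [d2, d.1]
    norm_cast; omega
  have hsep : h₁.Separable := by
    rw [Polynomial.Separable, isCoprime_iff_aeval_ne_zero_of_isAlgClosed (K := ℂ) ℂ]
    intro x
    by_contra! hc
    obtain ⟨c1, c2⟩ := hc
    rw [hh] at c1 c2
    simp only [coe_aeval_eq_eval, derivative_neg, eval_neg, neg_eq_zero] at c1 c2
    exact hh_main V h0 h1 hr m x c1 c2
  have ev2 : ∀ k : ℕ, (V k).eval 2 = 1 ∧ (V (k + 1)).eval 2 = 1 := by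
    intro k
    induction k with
    | zero => simp [h0, h1]; norm_num
    | succ k ih =>
      refine ⟨ih.2, ?_⟩
      rw [hr k]; simp [ih.1, ih.2]; norm_num
  have evm2 : ∀ k : ℕ, (V k).eval (-2) = (-1) ^ k * (2 * k + 1) ∧
      (V (k + 1)).eval (-2) = (-1) ^ (k + 1) * (2 * k + 3) := by
    intro k
    induction k with
    | zero => simp [h0, h1]; norm_num
    | succ k ih =>
      refine ⟨by rw [ih.2]; push_cast; ring, ?_⟩
      rw [hr k]; simp [ih.1, ih.2]; ring
  refine ⟨hdeg, hsep.squarefree, ?_, ?_⟩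
  · rw [Multiset.toFinset_card_of_nodup (nodup_roots hsep), IsAlgClosed.card_roots_eq_natDegree]
    exact natDegree_eq_of_degree_eq_some hdeg
  · intro z hz
    constructor
    · rintro rfl
      rw [hh] at hz
      simp [(ev2 m).1, (ev2 m).2] at hz
      norm_num at hz
    · rintro rfl
      rw [hh] at hz
      simp only [eval_neg, eval_add, eval_mul, eval_ofNat, (evm2 m).1, (evm2 m).2] at hz
      have h3 : (-1 : ℂ) ^ m * (2 * m + 5) = 0 := by
        rw [pow_succ] at hz
        linear_combination hz
      rcases mul_eq_zero.1 h3 with h | h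
      · exact absurd h (pow_ne_zero _ (by norm_num))
      · have : ((2 * m + 5 : ℕ) : ℂ) = 0 := by push_cast; exact h
        rw [Nat.cast_eq_zero] at this
        omega
end

section
/- Let n be a positive integer. The set of pairs (x,z) ∈ ℂ² satisfying both equations 4 + (z−2)(z+2−x²)·S_{n−1}(z)² = 0 and S_{3n}(z) − S_{3n−1}(z) − x²·(z−2)·S_{n−1}(z)²·(S_n(z) − S_{n−1}(z)) = 0 is finite and has exactly 2n elements. -/
open Polynomial in
lemma aux_poly (S : ℤ → ℂ → ℂ)
    (hS0 : ∀ z : ℂ, S 0 z = 1)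
    (hS1 : ∀ z : ℂ, S 1 z = z)
    (hSrec : ∀ (j : ℤ) (z : ℂ), S (j + 1) z = z * S j z - S (j - 1) z) (n : ℕ) :
    (∃ p : ℂ[X], p.natDegree ≤ n ∧ ∀ z, p.eval z = S n z) ∧
    (∃ p : ℂ[X], p.natDegree ≤ n ∧ ∀ z, p.eval z = S (n - 1) z) := by
  induction n with
  | zero =>
    refine ⟨⟨1, by simp, fun z => by simp [hS0]⟩, ⟨0, by simp, fun z => ?_⟩⟩
    have h := hSrec 0 z
    simp [hS0, hS1] at h
    replace h : S (-1) z = 0 := by linear_combination h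
    simp [h]
  | succ k ih =>
    obtain ⟨⟨p, hp, hpe⟩, ⟨q, hq, hqe⟩⟩ := ih
    refine ⟨⟨X * p - q, ?_, fun z => ?_⟩, ⟨p, by omega, fun z => by simp [hpe]⟩⟩
    · refine (natDegree_sub_le _ _).trans (max_le ?_ (by omega))
      refine natDegree_mul_le.trans ?_
      rw [natDegree_X]; omega
    · push_cast
      rw [hSrec]; simp [hpe, hqe]

lemma aux_add (S : ℤ → ℂ → ℂ)
    (hS0 : ∀ z : ℂ, S 0 z = 1)
    (hS1 : ∀ z : ℂ, S 1 z = z)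
    (hSrec : ∀ (j : ℤ) (z : ℂ), S (j + 1) z = z * S j z - S (j - 1) z) (z : ℂ) (k : ℕ) (m : ℤ) :
    S (m + k) z = S m z * S k z - S (m - 1) z * S (k - 1) z ∧
    S (m + k - 1) z = S m z * S (k - 1) z - S (m - 1) z * S (k - 2) z := by
  have hm1 : S (-1) z = 0 := by
    have h := hSrec 0 z
    simp [hS0, hS1] at h
    linear_combination h
  have hm2 : S (-2) z = -1 := by
    have h := hSrec (-1) z
    simp [hS0, hm1] at h
    norm_num at h
    linear_combination h
  induction k with
  | zero => simp [hS0, hm1, hm2]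
  | succ k ih =>
    obtain ⟨h1, h2⟩ := ih
    have e1 := hSrec (m + k) z
    have e2 := hSrec k z
    have e3 := hSrec (k - 1) z
    rw [show (k : ℤ) - 1 + 1 = k by ring, show (k : ℤ) - 1 - 1 = k - 2 by ring] at e3
    push_cast
    rw [show m + ((k : ℤ) + 1) = m + k + 1 by ring, show m + (k : ℤ) + 1 - 1 = m + k by ring,
      show (k : ℤ) + 1 - 1 = k by ring, show (k : ℤ) + 1 - 2 = k - 1 by ring]
    refine ⟨?_, h1⟩
    rw [e1, h1, h2, e2]
    linear_combination S (m - 1) z * e3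

lemma aux_trig (S : ℤ → ℂ → ℂ)
    (hS0 : ∀ z : ℂ, S 0 z = 1)
    (hS1 : ∀ z : ℂ, S 1 z = z)
    (hSrec : ∀ (j : ℤ) (z : ℂ), S (j + 1) z = z * S j z - S (j - 1) z) (t : ℝ) (k : ℕ) :
    (S k (2 * Real.cos t : ℝ) - S (k - 1) (2 * Real.cos t : ℝ)) * (Real.cos (t / 2) : ℝ)
      = (Real.cos ((k + 1 / 2) * t) : ℝ) ∧
    (S (k - 1) (2 * Real.cos t : ℝ) - S (k - 2) (2 * Real.cos t : ℝ)) * (Real.cos (t / 2) : ℝ)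
      = (Real.cos ((k - 1 / 2) * t) : ℝ) := by
  generalize hz : ((2 * Real.cos t : ℝ) : ℂ) = z
  have hm1 : S (-1) z = 0 := by
    have h := hSrec 0 z
    simp [hS0, hS1] at h
    linear_combination h
  have hm2 : S (-2) z = -1 := by
    have h := hSrec (-1) z
    simp [hS0, hm1] at h
    norm_num at h
    linear_combination h
  induction k with
  | zero =>
    have a1 : (((0 : ℕ) : ℝ) + 1 / 2) * t = t / 2 := by push_cast; ring
    have a2 : (((0 : ℕ) : ℝ) - 1 / 2) * t = -(t / 2) := by push_cast; ring
    rw [a1, a2, Real.cos_neg]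
    simp [hS0, hm1, hm2]
  | succ k ih =>
    obtain ⟨h1, h2⟩ := ih
    have e2 := hSrec k z
    have e3 := hSrec (k - 1) z
    rw [show (k : ℤ) - 1 + 1 = k by ring, show (k : ℤ) - 1 - 1 = k - 2 by ring] at e3
    push_cast only [Nat.cast_succ]
    rw [show (k : ℤ) + 1 - 1 = k by ring, show (k : ℤ) + 1 - 2 = k - 1 by ring,
      show ((k : ℝ) + 1 - 1 / 2) = k + 1 / 2 by ring]
    refine ⟨?_, h1⟩
    have c : Real.cos (((k : ℝ) + 1 + 1 / 2) * t)
        = 2 * Real.cos t * Real.cos ((k + 1 / 2) * t) - Real.cos ((k - 1 / 2) * t) := by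
      rw [show ((k : ℝ) + 1 + 1 / 2) * t = (k + 1 / 2) * t + t by ring,
        show ((k : ℝ) - 1 / 2) * t = (k + 1 / 2) * t - t by ring, Real.cos_add, Real.cos_sub]
      ring
    rw [c, Complex.ofReal_sub, Complex.ofReal_mul, hz, ← h1, ← h2, e2]
    linear_combination -(Real.cos (t / 2) : ℂ) * e3

lemma aux_zero (n k : ℕ) (hk : k < n) :
    ∃ t : ℝ, k * Real.pi / (n + 1 / 2) < t ∧ t < (k + 1 : ℕ) * Real.pi / (n + 1 / 2) ∧
      2 * Real.cos ((n + 1 / 2) * t) + Real.cos ((n - 1 / 2) * t) = 0 := by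
  have hpi := Real.pi_pos
  have hn : (0 : ℝ) < n + 1 / 2 := by positivity
  have hc : ∀ j : ℕ, Real.cos ((n + 1 / 2) * (j * Real.pi / (n + 1 / 2))) = (-1) ^ j := by
    intro j
    rw [mul_div_cancel₀ _ hn.ne', Real.cos_nat_mul_pi]
  let g : ℝ → ℝ := fun t => (-1) ^ k * (2 * Real.cos ((n + 1 / 2) * t) + Real.cos ((n - 1 / 2) * t))
  have hg : Continuous g := by fun_prop
  have hlt : k * Real.pi / (n + 1 / 2) < (k + 1 : ℕ) * Real.pi / ((n : ℝ) + 1 / 2) := by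
    gcongr; simp
  have h1 : 0 < g (k * Real.pi / (n + 1 / 2)) := by
    simp only [g]
    rw [hc]
    have b1 := Real.neg_one_le_cos ((n - 1 / 2) * (k * Real.pi / (n + 1 / 2)))
    have b2 := Real.cos_le_one ((n - 1 / 2) * (k * Real.pi / (n + 1 / 2)))
    rcases neg_one_pow_eq_or ℝ k with h | h <;> rw [h] <;> linarith
  have h2 : g ((k + 1 : ℕ) * Real.pi / (n + 1 / 2)) < 0 := by
    simp only [g]
    rw [hc, pow_succ]
    have b1 := Real.neg_one_le_cos ((n - 1 / 2) * ((k + 1 : ℕ) * Real.pi / (n + 1 / 2)))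
    have b2 := Real.cos_le_one ((n - 1 / 2) * ((k + 1 : ℕ) * Real.pi / (n + 1 / 2)))
    rcases neg_one_pow_eq_or ℝ k with h | h <;> rw [h] <;> linarith
  obtain ⟨t, ht, h0⟩ := intermediate_value_Ioo' hlt.le hg.continuousOn ⟨h2, h1⟩
  refine ⟨t, ht.1, ht.2, ?_⟩
  exact (mul_eq_zero.mp h0).resolve_left (by positivity)

open Polynomial in
lemma aux_roots (S : ℤ → ℂ → ℂ)
    (hS0 : ∀ z : ℂ, S 0 z = 1)
    (hS1 : ∀ z : ℂ, S 1 z = z)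
    (hSrec : ∀ (j : ℤ) (z : ℂ), S (j + 1) z = z * S j z - S (j - 1) z) (n : ℕ) (hn : 1 ≤ n)
    (h2 : 2 * S n 2 - S (n - 1) 2 - S (n - 2) 2 = 3) :
    ∃ T : Finset ℂ, T.card = n ∧ ∀ z, z ∈ T ↔ 2 * S n z - S (n - 1) z - S (n - 2) z = 0 := by
  obtain ⟨⟨p, hp, hpe⟩, ⟨q, hq, hqe⟩⟩ := aux_poly S hS0 hS1 hSrec n
  obtain ⟨-, ⟨r, hr, hre⟩⟩ := aux_poly S hS0 hS1 hSrec (n - 1)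
  have hre' : ∀ z, r.eval z = S (n - 2) z := by
    intro z
    rw [hre]; congr 1; omega
  let P : ℂ[X] := 2 * p - q - r
  have hPe : ∀ z, P.eval z = 2 * S n z - S (n - 1) z - S (n - 2) z := by
    intro z; simp [P, hpe, hqe, hre']
  have hP0 : P ≠ 0 := by
    intro h
    have := hPe 2
    rw [h2, h] at this
    norm_num at this
  have hPd : P.natDegree ≤ n := by
    refine (natDegree_sub_le _ _).trans (max_le ((natDegree_sub_le _ _).trans (max_le ?_ hq)) (by omega))
    refine natDegree_mul_le.trans ?_
    have : (2 : ℂ[X]).natDegree = 0 := natDegree_ofNat 2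
    omega
  have hmem : ∀ z, z ∈ P.roots.toFinset ↔ 2 * S n z - S (n - 1) z - S (n - 2) z = 0 := by
    intro z
    rw [Multiset.mem_toFinset, mem_roots hP0, IsRoot.def, hPe]
  refine ⟨P.roots.toFinset, le_antisymm ?_ ?_, hmem⟩
  · exact (Multiset.toFinset_card_le _).trans ((card_roots' P).trans hPd)
  · have hpi := Real.pi_pos
    choose t ht1 ht2 ht0 using fun k : Fin n => aux_zero n k k.2
    have htp : ∀ k, 0 < t k := fun k => lt_of_le_of_lt (by positivity) (ht1 k)
    have htpi : ∀ k, t k < Real.pi := by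
      intro k
      refine (ht2 k).trans ?_
      rw [div_lt_iff₀ (by positivity)]
      have : (((k : ℕ) + 1 : ℕ) : ℝ) ≤ n := by exact_mod_cast k.2
      nlinarith
    have hmono : StrictMono t := by
      intro i j hij
      refine (ht2 i).trans_le (le_trans ?_ (ht1 j).le)
      have : (((i : ℕ) + 1 : ℕ) : ℝ) ≤ (j : ℕ) := by exact_mod_cast hij
      gcongr
    let f : Fin n → ℂ := fun k => ((2 * Real.cos (t k) : ℝ) : ℂ)
    have hf : Function.Injective f := by
      intro i j hij
      have h : 2 * Real.cos (t i) = 2 * Real.cos (t j) := Complex.ofReal_injective hij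
      exact hmono.injective (Real.injOn_cos ⟨(htp i).le, (htpi i).le⟩ ⟨(htp j).le, (htpi j).le⟩
        (by linarith))
    have hsub : Finset.univ.image f ⊆ P.roots.toFinset := by
      intro z hz
      obtain ⟨k, -, rfl⟩ := Finset.mem_image.mp hz
      rw [hmem]
      obtain ⟨a1, a2⟩ := aux_trig S hS0 hS1 hSrec (t k) n
      have hc : ((Real.cos (t k / 2) : ℝ) : ℂ) ≠ 0 := by
        rw [Complex.ofReal_ne_zero]
        exact (Real.cos_pos_of_mem_Ioo ⟨by linarith [htp k], by linarith [htpi k]⟩).ne'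
      have h0 : (2 : ℂ) * (Real.cos ((n + 1 / 2) * t k) : ℝ) + (Real.cos ((n - 1 / 2) * t k) : ℝ) = 0 := by
        exact_mod_cast ht0 k
      apply mul_right_cancel₀ hc
      rw [← a1, ← a2] at h0
      simp only [f]
      linear_combination h0
    have := Finset.card_le_card hsub
    rwa [Finset.card_image_of_injective _ hf, Finset.card_univ, Fintype.card_fin] at this

lemma aux_two (S : ℤ → ℂ → ℂ)
    (hS0 : ∀ z : ℂ, S 0 z = 1)
    (hS1 : ∀ z : ℂ, S 1 z = z)
    (hSrec : ∀ (j : ℤ) (z : ℂ), S (j + 1) z = z * S j z - S (j - 1) z) (n : ℕ) :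
    S n 2 = n + 1 ∧ S (n - 1) 2 = n := by
  induction n with
  | zero =>
    have h := hSrec 0 2
    simp [hS0, hS1] at h
    replace h : S (-1) 2 = 0 := by linear_combination h
    simp [h, hS0]
  | succ k ih =>
    push_cast
    rw [hSrec, add_sub_cancel_right, ih.1, ih.2]
    exact ⟨by ring, rfl⟩

lemma aux_norm (S : ℤ → ℂ → ℂ)
    (hS0 : ∀ z : ℂ, S 0 z = 1)
    (hS1 : ∀ z : ℂ, S 1 z = z)
    (hSrec : ∀ (j : ℤ) (z : ℂ), S (j + 1) z = z * S j z - S (j - 1) z) (z : ℂ) (n : ℕ) :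
    S n z ^ 2 - z * S n z * S (n - 1) z + S (n - 1) z ^ 2 = 1 := by
  induction n with
  | zero =>
    have h := hSrec 0 z
    simp [hS0, hS1] at h
    replace h : S (-1) z = 0 := by linear_combination h
    simp [h, hS0]
  | succ k ih =>
    push_cast
    rw [hSrec, add_sub_cancel_right]
    linear_combination ih

/-- For a positive integer `n`, the set of pairs
`(x, z) ∈ ℂ²` satisfying `4 + (z-2)*(z+2-x²)*S (n-1) z ^ 2 = 0` and
`S (3n) z - S (3n-1) z - x²*(z-2)*S (n-1) z ^ 2*(S n z - S (n-1) z) = 0`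
is finite and has exactly `2n` elements (where the `S j` are the
Chebyshev-like polynomials with `S 0 = 1`, `S 1 = z` and
`S (j+1) = z * S j - S (j-1)`). -/
theorem genus_system_card
    (S : ℤ → ℂ → ℂ)
    (hS0 : ∀ z : ℂ, S 0 z = 1)
    (hS1 : ∀ z : ℂ, S 1 z = z)
    (hSrec : ∀ (j : ℤ) (z : ℂ), S (j + 1) z = z * S j z - S (j - 1) z)
    (n : ℕ) (hn : 1 ≤ n) :
    Set.Finite {p : ℂ × ℂ |
        4 + (p.2 - 2) * (p.2 + 2 - p.1 ^ 2) * S ((n : ℤ) - 1) p.2 ^ 2 = 0 ∧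
        S (3 * (n : ℤ)) p.2 - S (3 * (n : ℤ) - 1) p.2
          - p.1 ^ 2 * (p.2 - 2) * S ((n : ℤ) - 1) p.2 ^ 2
            * (S (n : ℤ) p.2 - S ((n : ℤ) - 1) p.2) = 0} ∧
    Set.ncard {p : ℂ × ℂ |
        4 + (p.2 - 2) * (p.2 + 2 - p.1 ^ 2) * S ((n : ℤ) - 1) p.2 ^ 2 = 0 ∧
        S (3 * (n : ℤ)) p.2 - S (3 * (n : ℤ) - 1) p.2
          - p.1 ^ 2 * (p.2 - 2) * S ((n : ℤ) - 1) p.2 ^ 2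
            * (S (n : ℤ) p.2 - S ((n : ℤ) - 1) p.2) = 0} = 2 * n := by
  have hc : ∀ z, S (n - 2) z = z * S (n - 1) z - S n z := by
    intro z
    have e3 := hSrec (n - 1) z
    rw [show (n : ℤ) - 1 + 1 = n by ring, show (n : ℤ) - 1 - 1 = n - 2 by ring] at e3
    linear_combination e3
  have hnorm := fun z => aux_norm S hS0 hS1 hSrec z n
  have hP2 : 2 * S n 2 - S (n - 1) 2 - S (n - 2) 2 = 3 := by
    obtain ⟨h1, h2⟩ := aux_two S hS0 hS1 hSrec n
    rw [hc, h1, h2]; ring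
  obtain ⟨T, hTc, hT⟩ := aux_roots S hS0 hS1 hSrec n hn hP2
  -- the polynomial identity
  have hid : ∀ z, S (3 * n) z - S (3 * n - 1) z
      = (4 + (z ^ 2 - 4) * S (n - 1) z ^ 2) * (S n z - S (n - 1) z)
        - (2 * S n z - S (n - 1) z - S (n - 2) z) := by
    intro z
    obtain ⟨a1, a2⟩ := aux_add S hS0 hS1 hSrec z n n
    obtain ⟨b1, b2⟩ := aux_add S hS0 hS1 hSrec z n (n + n)
    rw [show (n : ℤ) + n + n = 3 * n by ring] at b1 b2
    rw [b1, b2, a1, a2, hc]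
    linear_combination (S n z + (z - 3) * S (n - 1) z) * hnorm z
  have hz2 : ∀ z ∈ T, z - 2 ≠ 0 := by
    intro z hz h
    have : z = 2 := by linear_combination h
    subst this
    rw [hT, hP2] at hz
    norm_num at hz
  have hb : ∀ z ∈ T, S (n - 1) z ≠ 0 := by
    intro z hz h
    rw [hT, hc, h] at hz
    have ha : S n z = 0 := by linear_combination hz / 3
    have := hnorm z
    rw [h, ha] at this
    norm_num at this
  have hac : ∀ z ∈ T, 4 + (z ^ 2 - 4) * S (n - 1) z ^ 2 ≠ 0 := by
    intro z hz h
    have h1 : (2 * S n z - z * S (n - 1) z) ^ 2 = 0 := by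
      linear_combination h + 4 * hnorm z
    have h2 := pow_eq_zero_iff (two_ne_zero) |>.mp h1
    have h3 := (hT z).1 hz
    rw [hc] at h3
    have h4 : (z - 2) * S (n - 1) z = 0 := by linear_combination 2 * h3 - 3 * h2
    rcases mul_eq_zero.mp h4 with h | h
    · exact hz2 z hz h
    · exact hb z hz h
  choose s hs using fun z : ℂ => IsAlgClosed.exists_pow_nat_eq
    ((4 + (z ^ 2 - 4) * S (n - 1) z ^ 2) / ((z - 2) * S (n - 1) z ^ 2)) (n := 2) (by norm_num)
  have hs0 : ∀ z ∈ T, s z ≠ 0 := by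
    intro z hz h
    have := hs z
    rw [h, zero_pow two_ne_zero, eq_comm, div_eq_zero_iff] at this
    rcases this with h | h
    · exact hac z hz h
    · exact mul_ne_zero (hz2 z hz) (pow_ne_zero 2 (hb z hz)) h
  have hsm : ∀ z ∈ T, s z ^ 2 * ((z - 2) * S (n - 1) z ^ 2) = 4 + (z ^ 2 - 4) * S (n - 1) z ^ 2 := by
    intro z hz
    rw [hs, div_mul_cancel₀ _ (mul_ne_zero (hz2 z hz) (pow_ne_zero 2 (hb z hz)))]
  let F : Finset (ℂ × ℂ) := (T ×ˢ ({1, -1} : Finset ℂ)).image fun q => (q.2 * s q.1, q.1)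
  have hset : {p : ℂ × ℂ |
        4 + (p.2 - 2) * (p.2 + 2 - p.1 ^ 2) * S ((n : ℤ) - 1) p.2 ^ 2 = 0 ∧
        S (3 * (n : ℤ)) p.2 - S (3 * (n : ℤ) - 1) p.2
          - p.1 ^ 2 * (p.2 - 2) * S ((n : ℤ) - 1) p.2 ^ 2
            * (S (n : ℤ) p.2 - S ((n : ℤ) - 1) p.2) = 0} = (F : Set (ℂ × ℂ)) := by
    ext ⟨x, z⟩
    simp only [Set.mem_ofPred_eq, Finset.mem_coe, F, Finset.mem_image, Finset.mem_product,
      Finset.mem_insert, Finset.mem_singleton, Prod.mk.injEq, Prod.exists]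
    rw [hid]
    constructor
    · rintro ⟨h1, h2⟩
      have hz : z ∈ T := by
        rw [hT]
        linear_combination -h2 + (S n z - S (n - 1) z) * h1
      have hx : x ^ 2 = s z ^ 2 := by
        apply mul_right_cancel₀ (mul_ne_zero (hz2 z hz) (pow_ne_zero 2 (hb z hz)))
        rw [hsm z hz]
        linear_combination -h1
      rcases sq_eq_sq_iff_eq_or_eq_neg.mp hx with h | h
      · exact ⟨z, 1, ⟨hz, Or.inl rfl⟩, by rw [h, one_mul], rfl⟩
      · exact ⟨z, -1, ⟨hz, Or.inr rfl⟩, by rw [h, neg_one_mul], rfl⟩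
    · rintro ⟨w, e, ⟨hz, he⟩, rfl, rfl⟩
      have he2 : (e * s w) ^ 2 = s w ^ 2 := by
        rcases he with rfl | rfl <;> ring
      have h3 := (hT w).1 hz
      have h4 := hsm w hz
      rw [he2, h3]
      constructor
      · linear_combination -h4
      · linear_combination -(S n w - S (n - 1) w) * h4
  rw [hset]
  refine ⟨F.finite_toSet, ?_⟩
  rw [Set.ncard_coe_finset, Finset.card_image_of_injOn, Finset.card_product, hTc,
    Finset.card_pair (by norm_num), mul_comm]
  rintro ⟨z, e⟩ hz ⟨w, d⟩ hw h
  simp only [Prod.mk.injEq] at h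
  obtain ⟨h1, rfl⟩ := h
  have hz' := (Finset.mem_product.mp (Finset.mem_coe.mp hz)).1
  rw [mul_right_cancel₀ (hs0 z hz') h1]
end

section
/- Let n be a positive integer and let h₃(z) = S_{3n}(z) − S_{3n−1}(z) − (3 + (z²−4)·S_{n−1}(z)²)·(S_n(z) − S_{n−1}(z)). Then h₃ is a polynomial in z of degree n, it has exactly n distinct complex roots (i.e., h₃ has no multiple roots), and none of its roots equals 2 or −2. -/
open Polynomial

lemma S_eq_cheb (S : ℤ → Polynomial ℂ)
    (hS0 : S 0 = 1)
    (hS1 : S 1 = Polynomial.X)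
    (hSrec : ∀ j : ℤ, S (j + 1) = Polynomial.X * S j - S (j - 1)) (j : ℤ) :
    S j = Chebyshev.S ℂ j := by
  induction j using Polynomial.Chebyshev.induct with
  | zero => simp [hS0]
  | one => simp [hS1]
  | add_two n h1 h2 =>
    have := hSrec (n + 1)
    rw [add_assoc, add_sub_cancel_right] at this
    rw [Chebyshev.S_add_two, ← h1, ← h2]
    exact this
  | neg_add_one n h1 h2 =>
    have := hSrec (-n)
    rw [Chebyshev.S_sub_one, ← h1, ← h2, this]
    ring

lemma cheb_S_add (k m : ℤ) : Chebyshev.S ℂ (m + k) =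
    Chebyshev.S ℂ m * Chebyshev.S ℂ k - Chebyshev.S ℂ (m - 1) * Chebyshev.S ℂ (k - 1) := by
  induction m using Polynomial.Chebyshev.induct with
  | zero => simp
  | one => simp [add_comm 1 k, Chebyshev.S_add_one]
  | add_two n h1 h2 =>
    have e1 := Chebyshev.S_add_two ℂ (n + k)
    have e2 := Chebyshev.S_add_two ℂ (n : ℤ)
    have e3 := Chebyshev.S_add_one ℂ (n : ℤ)
    rw [show (n : ℤ) + 2 + k = n + k + 2 by ring, show (n : ℤ) + 2 - 1 = n + 1 by ring, e1,
      show (n : ℤ) + k + 1 = n + 1 + k by ring, h1, h2, add_sub_cancel_right, e2]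
    linear_combination (Chebyshev.S ℂ (k-1)) * e3
  | neg_add_one n h1 h2 =>
    have e1 := Chebyshev.S_sub_one ℂ (-n + k)
    have e2 := Chebyshev.S_sub_one ℂ (-n : ℤ)
    have e3 := Chebyshev.S_sub_one ℂ (-n - 1: ℤ)
    rw [show -(n : ℤ) - 1 + k = -n + k - 1 by ring, e1,
      show -(n : ℤ) + k + 1 = -n + 1 + k by ring, h1, h2, add_sub_cancel_right, e3,
      sub_add_cancel, e2]
    ring

lemma cheb_C_degree (n : ℕ) : (Chebyshev.C ℂ n).natDegree = n := by
  let _ : Invertible (2 : ℂ) := invertibleOfNonzero two_ne_zero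
  rw [Chebyshev.C_eq_two_mul_T_comp_half_mul_X, ← C_ofNat, natDegree_C_mul two_ne_zero,
    natDegree_comp, natDegree_C_mul_X _ (by simp), Chebyshev.natDegree_T]
  simp

lemma cheb_C_deriv (n : ℤ) :
    derivative (Chebyshev.C ℂ n) = (n : ℂ[X]) * Chebyshev.S ℂ (n - 1) := by
  let _ : Invertible (2 : ℂ) := invertibleOfNonzero two_ne_zero
  have h : (2 : ℂ[X]) * Polynomial.C (⅟2 : ℂ) = 1 := by
    rw [← C_ofNat, ← Polynomial.C_mul, mul_invOf_self, Polynomial.C_1]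
  rw [Chebyshev.C_eq_two_mul_T_comp_half_mul_X, Chebyshev.S_eq_U_comp_half_mul_X,
    ← C_ofNat, derivative_C_mul, C_ofNat, derivative_comp, Chebyshev.T_derivative_eq_U, derivative_C_mul,
    derivative_X, mul_comp, intCast_comp]
  linear_combination ((n : ℂ[X]) * (Chebyshev.U ℂ (n - 1)).comp (Polynomial.C ⅟2 * X)) * h

lemma cheb_pell (n : ℤ) :
    Chebyshev.C ℂ n ^ 2 - (X ^ 2 - 4) * Chebyshev.S ℂ (n - 1) ^ 2 = 4 := by
  have h := Chebyshev.S_sq_add_S_sq ℂ (n - 1)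
  rw [sub_add_cancel] at h
  rw [Chebyshev.C_eq_S_sub_X_mul_S]
  linear_combination 4 * h

/-- For a positive integer `n`, the polynomial
`h₃ = S (3n) - S (3n-1) - (3 + (X² - 4) * S (n-1) ^ 2) * (S n - S (n-1))`
(where the `S j` are the Chebyshev-like polynomials with `S 0 = 1`, `S 1 = X`
and `S (j+1) = X * S j - S (j-1)`) has degree `n`, has no multiple roots,
has exactly `n` distinct complex roots, and none of its roots equals `2` or
`-2`. -/
theorem h3_distinct_roots
    (S : ℤ → Polynomial ℂ)
    (hS0 : S 0 = 1)
    (hS1 : S 1 = Polynomial.X)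
    (hSrec : ∀ j : ℤ, S (j + 1) = Polynomial.X * S j - S (j - 1))
    (n : ℕ) (hn : 1 ≤ n)
    (h₃ : Polynomial ℂ)
    (hh₃ : h₃ = S (3 * (n : ℤ)) - S (3 * (n : ℤ) - 1)
        - (3 + (Polynomial.X ^ 2 - 4) * S ((n : ℤ) - 1) ^ 2)
          * (S (n : ℤ) - S ((n : ℤ) - 1))) :
    h₃.degree = n ∧ Squarefree h₃ ∧ h₃.roots.toFinset.card = n ∧
      ∀ z : ℂ, h₃.eval z = 0 → z ≠ 2 ∧ z ≠ -2 := by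
  have key : h₃ = -Chebyshev.C ℂ n := by
    rw [hh₃]
    simp only [S_eq_cheb S hS0 hS1 hSrec]
    have h := Chebyshev.S_sq_add_S_sq ℂ ((n : ℤ) - 1)
    rw [sub_add_cancel] at h
    have a1 := cheb_S_add n (2 * n)
    have a2 := cheb_S_add ((n : ℤ) - 1) (2 * n)
    have a3 := cheb_S_add n n
    have a4 := cheb_S_add ((n : ℤ) - 1) n
    have a5 := Chebyshev.S_sub_two ℂ (n : ℤ)
    rw [show (n : ℤ) - 1 - 1 = n - 2 by ring, a5] at a2 a4
    rw [show (n : ℤ) + n = 2 * n by ring] at a3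
    rw [show (n : ℤ) + (n - 1) = 2 * n - 1 by ring] at a4
    rw [show 2 * (n : ℤ) + n = 3 * n by ring, a3, a4] at a1
    rw [show 2 * (n : ℤ) + (n - 1) = 3 * n - 1 by ring, a3, a4] at a2
    rw [a1, a2, Chebyshev.C_eq_S_sub_X_mul_S]
    generalize Chebyshev.S ℂ (n : ℤ) = A at *
    generalize Chebyshev.S ℂ ((n : ℤ) - 1) = B at *
    linear_combination (A - B + (X - 2) * B) * h
  have hnat : h₃.natDegree = n := by rw [key, natDegree_neg, cheb_C_degree]
  have hne : h₃ ≠ 0 := by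
    rintro rfl
    simp at hnat
    omega
  have hn0 : (n : ℂ) ≠ 0 := by exact_mod_cast (by omega : n ≠ 0)
  have hsep : h₃.Separable := by
    have hp := cheb_pell n
    have hd := cheb_C_deriv n
    have hc : (n : ℂ[X]) * Polynomial.C ((n : ℂ)⁻¹) = 1 := by
      rw [← C_eq_natCast, ← Polynomial.C_mul, mul_inv_cancel₀ hn0, Polynomial.C_1]
    have h4 : (4 : ℂ[X]) * Polynomial.C ((4 : ℂ)⁻¹) = 1 := by
      rw [← C_ofNat, ← Polynomial.C_mul, mul_inv_cancel₀ (by norm_num), Polynomial.C_1]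
    rw [key, Polynomial.separable_def]
    refine ⟨-Polynomial.C (4 : ℂ)⁻¹ * Chebyshev.C ℂ n, Polynomial.C (4 : ℂ)⁻¹ *
      ((X ^ 2 - 4) * Chebyshev.S ℂ ((n : ℤ) - 1) * Polynomial.C ((n : ℂ)⁻¹)), ?_⟩
    rw [derivative_neg, hd, Int.cast_natCast]
    linear_combination Polynomial.C (4 : ℂ)⁻¹ * hp + h4 - Polynomial.C (4 : ℂ)⁻¹ *
      (X ^ 2 - 4) * Chebyshev.S ℂ ((n : ℤ) - 1) ^ 2 * hc
  refine ⟨?_, hsep.squarefree, ?_, ?_⟩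
  · rw [degree_eq_natDegree hne, hnat]
  · rw [Multiset.toFinset_card_of_nodup (nodup_roots hsep),
      ← (IsAlgClosed.splits h₃).natDegree_eq_card_roots, hnat]
  · intro z hz
    have hp := congrArg (eval z) (cheb_pell n)
    have hz' : eval z (Chebyshev.C ℂ n) = 0 := by simpa [key] using hz
    simp only [eval_sub, eval_mul, eval_pow, eval_X, eval_ofNat, hz'] at hp
    constructor <;> rintro rfl <;> norm_num at hp
end

section
/- Let n be a positive integer. The set of pairs (x,z) ∈ ℂ² satisfying both equations 4 + (z−2)(z+2−x²)·S_{n−1}(z)² = 1 and S_{3n}(z) − S_{3n−1}(z) − x²·(z−2)·S_{n−1}(z)²·(S_n(z) − S_{n−1}(z)) = 0 is finite and has exactly 2n elements. -/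
open Polynomial in
lemma aux_S_eq (S : ℤ → ℂ → ℂ)
    (hS0 : ∀ z : ℂ, S 0 z = 1)
    (hS1 : ∀ z : ℂ, S 1 z = z)
    (hSrec : ∀ (j : ℤ) (z : ℂ), S (j + 1) z = z * S j z - S (j - 1) z)
    (j : ℤ) (z : ℂ) : S j z = (Chebyshev.S ℂ j).eval z := by
  induction j using Polynomial.Chebyshev.induct with
  | zero => simp [hS0]
  | one => simp [hS1]
  | add_two n h1 h0 =>
    have h := hSrec (n + 1) z
    rw [show (n : ℤ) + 1 + 1 = n + 2 by ring, show (n : ℤ) + 1 - 1 = n by ring] at h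
    rw [h, h1, h0, Chebyshev.S_add_two]
    simp
  | neg_add_one n h0 h1 =>
    have h := hSrec (-n) z
    rw [Chebyshev.S_sub_one]
    simp only [eval_sub, eval_mul, eval_X]
    rw [← h0, ← h1, h]
    ring

open Polynomial in
lemma aux_C_mul_S (n : ℕ) (k : ℤ) :
    Chebyshev.C ℂ n * Chebyshev.S ℂ k = Chebyshev.S ℂ (k + n) + Chebyshev.S ℂ (k - n) := by
  induction n using Nat.twoStepInduction generalizing k with
  | zero => simp; ring
  | one =>
    have := Chebyshev.S_add_one ℂ k
    simp [this]
  | more n h0 h1 =>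
    have e1 := Chebyshev.S_add_two ℂ (k + n)
    have e2 := Chebyshev.S_sub_two ℂ (k - n)
    have e3 := Chebyshev.C_add_two ℂ n
    have h0 := h0 k
    have h1 := h1 k
    push_cast at *
    rw [e3]
    rw [show k + ((n : ℤ) + 2) = k + n + 2 by ring, show k - ((n : ℤ) + 2) = k - n - 2 by ring, e1, e2]
    rw [show k + ((n : ℤ) + 1) = k + n + 1 by ring, show k - ((n : ℤ) + 1) = k - n - 1 by ring] at h1
    linear_combination X * h1 - h0

open Polynomial in
lemma aux_roots_s12 (m : ℕ) : {x : ℂ | (Chebyshev.T ℂ m).eval x = 0}.Finite ∧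
    {x : ℂ | (Chebyshev.T ℂ m).eval x = 0}.ncard = m := by
  classical
  set R : Finset ℝ := ((Finset.range m).image
    (fun (k : ℕ) => Real.cos ((2 * k + 1) * Real.pi / (2 * m)))) with hR
  have hroots : (Chebyshev.T ℝ m).roots = R.val := Chebyshev.roots_T_real m
  have hRc : R.card = m := by
    rw [hR, Finset.card_image_of_injOn, Finset.card_range]
    exact (Finset.range m).nodup_map_iff_injOn.mp (Chebyshev.roots_T_real_nodup m)
  have hmap : (Chebyshev.T ℝ m).map Complex.ofRealHom = Chebyshev.T ℂ m := by simp
  have hne : Chebyshev.T ℂ m ≠ 0 := Chebyshev.T_ne_zero ℂ m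
  set Q : Finset ℂ := R.image (fun x : ℝ => (x : ℂ)) with hQ
  have hQc : Q.card = m := by
    rw [hQ, Finset.card_image_of_injective _ Complex.ofReal_injective, hRc]
  have hC : (Chebyshev.T ℂ m).roots = Q.val := by
    refine roots_eq_of_degree_eq_card (fun x hx ↦ ?_) ?_
    · obtain ⟨y, hy, rfl⟩ := Finset.mem_image.mp hx
      have : y ∈ (Chebyshev.T ℝ m).roots := by rw [hroots]; exact hy
      have h0 := (mem_roots'.mp this).2
      rw [← hmap]
      have := eval_map_apply (p := Chebyshev.T ℝ m) (f := Complex.ofRealHom) y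
      simp only [Complex.ofRealHom_eq_coe] at this
      rw [this, h0]; simp
    · rw [hQc, Chebyshev.degree_T]; simp
  have : {x : ℂ | (Chebyshev.T ℂ m).eval x = 0} = (Q : Set ℂ) := by
    ext x
    rw [Set.mem_setOf_eq, Finset.mem_coe, ← Finset.mem_val, ← hC, mem_roots hne]
    rfl
  rw [this]
  exact ⟨Q.finite_toSet, by rw [Set.ncard_coe_finset, hQc]⟩

open Polynomial in
lemma aux_T_C (n : ℕ) (x : ℂ) :
    (Chebyshev.C ℂ n).eval (4 * x ^ 2 - 2) = 2 * (Chebyshev.T ℂ (2 * n : ℕ)).eval x := by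
  have h1 := congrArg (eval (2 * x ^ 2 - 1)) (Chebyshev.C_comp_two_mul_X ℂ n)
  have h2 := congrArg (eval x) (Chebyshev.T_mul ℂ n 2)
  simp only [eval_comp, eval_mul, eval_X, eval_ofNat, Chebyshev.T_two, eval_sub, eval_pow, eval_one] at h1 h2
  rw [show 2 * (2 * x ^ 2 - 1) = 4 * x ^ 2 - 2 by ring] at h1
  rw [h1, ← h2]
  push_cast
  rw [mul_comm (n : ℤ) 2]

/-- For a positive integer `n`, the set of pairs
`(x, z) ∈ ℂ²` satisfying `4 + (z-2)*(z+2-x²)*S (n-1) z ^ 2 = 1` and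
`S (3n) z - S (3n-1) z - x²*(z-2)*S (n-1) z ^ 2*(S n z - S (n-1) z) = 0`
is finite and has exactly `2n` elements (where the `S j` are the
Chebyshev-like polynomials with `S 0 = 1`, `S 1 = z` and
`S (j+1) = z * S j - S (j-1)`). -/
theorem fiberedness_system_card
    (S : ℤ → ℂ → ℂ)
    (hS0 : ∀ z : ℂ, S 0 z = 1)
    (hS1 : ∀ z : ℂ, S 1 z = z)
    (hSrec : ∀ (j : ℤ) (z : ℂ), S (j + 1) z = z * S j z - S (j - 1) z)
    (n : ℕ) (hn : 1 ≤ n) :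
    Set.Finite {p : ℂ × ℂ |
        4 + (p.2 - 2) * (p.2 + 2 - p.1 ^ 2) * S ((n : ℤ) - 1) p.2 ^ 2 = 1 ∧
        S (3 * (n : ℤ)) p.2 - S (3 * (n : ℤ) - 1) p.2
          - p.1 ^ 2 * (p.2 - 2) * S ((n : ℤ) - 1) p.2 ^ 2
            * (S (n : ℤ) p.2 - S ((n : ℤ) - 1) p.2) = 0} ∧
    Set.ncard {p : ℂ × ℂ |
        4 + (p.2 - 2) * (p.2 + 2 - p.1 ^ 2) * S ((n : ℤ) - 1) p.2 ^ 2 = 1 ∧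
        S (3 * (n : ℤ)) p.2 - S (3 * (n : ℤ) - 1) p.2
          - p.1 ^ 2 * (p.2 - 2) * S ((n : ℤ) - 1) p.2 ^ 2
            * (S (n : ℤ) p.2 - S ((n : ℤ) - 1) p.2) = 0} = 2 * n := by
  have hset : {p : ℂ × ℂ |
        4 + (p.2 - 2) * (p.2 + 2 - p.1 ^ 2) * S ((n : ℤ) - 1) p.2 ^ 2 = 1 ∧
        S (3 * (n : ℤ)) p.2 - S (3 * (n : ℤ) - 1) p.2
          - p.1 ^ 2 * (p.2 - 2) * S ((n : ℤ) - 1) p.2 ^ 2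
            * (S (n : ℤ) p.2 - S ((n : ℤ) - 1) p.2) = 0} =
      (fun x : ℂ => (x, 4 * x ^ 2 - 2)) ''
        {x : ℂ | (Polynomial.Chebyshev.T ℂ (2 * n : ℕ)).eval x = 0} := by
    have hT : ∀ x : ℂ, (Polynomial.Chebyshev.T ℂ (2 * n : ℕ)).eval x = 0 ↔
        (Polynomial.Chebyshev.C ℂ n).eval (4 * x ^ 2 - 2) = 0 := by
      intro x; rw [aux_T_C]; simp
    ext ⟨x, z⟩
    simp only [Set.mem_setOf_eq, Set.mem_image, Prod.mk.injEq, hT]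
    simp only [aux_S_eq S hS0 hS1 hSrec]
    have e (k : ℤ) := congrArg (Polynomial.eval z) (aux_C_mul_S n k)
    have e1 := e (2 * n)
    have e2 := e (2 * n - 1)
    have e3 := e n
    have e4 := e (n - 1)
    have e5 := congrArg (Polynomial.eval z) (Polynomial.Chebyshev.C_eq_S_sub_X_mul_S ℂ n)
    have e6 := congrArg (Polynomial.eval z) (Polynomial.Chebyshev.S_sq_add_S_sq ℂ (n - 1))
    rw [show 2 * (n : ℤ) + n = 3 * n by ring, show 2 * (n : ℤ) - n = n by ring] at e1
    rw [show 2 * (n : ℤ) - 1 + n = 3 * n - 1 by ring, show 2 * (n : ℤ) - 1 - n = n - 1 by ring] at e2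
    rw [show (n : ℤ) + n = 2 * n by ring, show (n : ℤ) - n = 0 by ring] at e3
    rw [show (n : ℤ) - 1 + n = 2 * n - 1 by ring, show (n : ℤ) - 1 - n = -1 by ring] at e4
    rw [sub_add_cancel] at e6
    simp only [Polynomial.eval_mul, Polynomial.eval_add, Polynomial.eval_sub, Polynomial.eval_pow,
      Polynomial.eval_X, Polynomial.eval_one, Polynomial.eval_ofNat, Polynomial.Chebyshev.S_zero,
      Polynomial.Chebyshev.S_neg_one, Polynomial.eval_zero] at e1 e2 e3 e4 e5 e6
    generalize (Polynomial.Chebyshev.S ℂ (3 * (n : ℤ))).eval z = s3 at *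
    generalize (Polynomial.Chebyshev.S ℂ (3 * (n : ℤ) - 1)).eval z = s3' at *
    generalize (Polynomial.Chebyshev.S ℂ (2 * (n : ℤ))).eval z = s2 at *
    generalize (Polynomial.Chebyshev.S ℂ (2 * (n : ℤ) - 1)).eval z = s2' at *
    generalize (Polynomial.Chebyshev.S ℂ (n : ℤ)).eval z = s at *
    generalize (Polynomial.Chebyshev.S ℂ ((n : ℤ) - 1)).eval z = s' at *
    have hz : (∃ y : ℂ, (Polynomial.Chebyshev.C ℂ n).eval (4 * y ^ 2 - 2) = 0 ∧
        y = x ∧ 4 * y ^ 2 - 2 = z) ↔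
        ((Polynomial.Chebyshev.C ℂ n).eval z = 0 ∧ 4 * x ^ 2 - 2 = z) := by
      constructor
      · rintro ⟨y, h, rfl, rfl⟩; exact ⟨h, rfl⟩
      · rintro ⟨h, rfl⟩; exact ⟨x, h, rfl, rfl⟩
    rw [hz]
    generalize (Polynomial.Chebyshev.C ℂ n).eval z = t at *
    have e7 : t ^ 2 - 4 = (z ^ 2 - 4) * s' ^ 2 := by
      rw [e5]; linear_combination 4 * e6
    have e8 : s3 - s3' = (t ^ 2 - 1) * (s - s') - t := by
      linear_combination e2 - e1 + t * (e4 - e3)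
    constructor
    · rintro ⟨h1, h2⟩
      have ht : t = 0 := by
        linear_combination e8 - h2 + (s - s') * (h1 + e7)
      refine ⟨ht, ?_⟩
      rw [ht] at e7
      have hne : (z - 2) * s' ^ 2 ≠ 0 := by
        intro h0
        have : (-4 : ℂ) = 0 := by linear_combination e7 + (z + 2) * h0
        norm_num at this
      have : (z - 2) * s' ^ 2 * (4 * x ^ 2 - 2 - z) = 0 := by
        linear_combination -4 * h1 - 3 * e7
      rcases mul_eq_zero.mp this with h | h
      · exact absurd h hne
      · linear_combination h
    · rintro ⟨rfl, h⟩
      have h1 : 4 + (z - 2) * (z + 2 - x ^ 2) * s' ^ 2 = 1 := by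
        linear_combination (-3/4) * e7 - (z - 2) * s' ^ 2 / 4 * h
      refine ⟨h1, ?_⟩
      linear_combination e8 + (s - s') * (h1 + e7)
  rw [hset]
  obtain ⟨hf, hc⟩ := aux_roots_s12 (2 * n)
  refine ⟨hf.image _, ?_⟩
  rw [Set.ncard_image_of_injective, hc]
  intro a b hab
  exact (Prod.mk.inj hab).1
end

section
/- Let M ∈ SL₂(ℂ) with y = tr(M), and let n be a positive integer. Then (y − 2)·det(I + M + M² + ⋯ + M^{n−1}) = T_n(y) − 2. In particular, if y ≠ 2 then det(Σ_{j=0}^{n−1} M^j) = (T_n(y) − 2)/(y − 2). -/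
theorem aux_det_sub_one (A : Matrix (Fin 2) (Fin 2) ℂ) (h : A.det = 1) :
    (A - 1).det = 2 - A.trace := by
  rw [Matrix.det_fin_two] at h
  simp [Matrix.det_fin_two, Matrix.trace_fin_two]
  linear_combination h

theorem aux_sq (A : Matrix (Fin 2) (Fin 2) ℂ) (h : A.det = 1) :
    A ^ 2 = A.trace • A - 1 := by
  rw [Matrix.det_fin_two] at h
  ext i j
  fin_cases i <;> fin_cases j <;>
    simp [pow_two, Matrix.mul_apply, Fin.sum_univ_two, Matrix.trace_fin_two]
  · linear_combination -h
  · ring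
  · ring
  · linear_combination -h

/-- For `M ∈ SL₂(ℂ)` with `y = tr M` and a positive integer
`n`, one has `(y - 2) * det (I + M + ⋯ + M^(n-1)) = T n y - 2`; in particular,
if `y ≠ 2` then `det (∑_{j=0}^{n-1} M^j) = (T n y - 2)/(y - 2)`.  Here the
`T j` are the Chebyshev-like polynomials with `T 0 = 2`, `T 1 = y` and
`T (j+1) = y * T j - T (j-1)`. -/
theorem det_geom_sum_SL2
    (T : ℤ → ℂ → ℂ)
    (hT0 : ∀ z : ℂ, T 0 z = 2)
    (hT1 : ∀ z : ℂ, T 1 z = z)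
    (hTrec : ∀ (j : ℤ) (z : ℂ), T (j + 1) z = z * T j z - T (j - 1) z)
    (M : Matrix.SpecialLinearGroup (Fin 2) ℂ) (y : ℂ)
    (hy : Matrix.trace (M : Matrix (Fin 2) (Fin 2) ℂ) = y)
    (n : ℕ) (hn : 1 ≤ n) :
    (y - 2) * Matrix.det (∑ j ∈ Finset.range n, (M : Matrix (Fin 2) (Fin 2) ℂ) ^ j)
        = T (n : ℤ) y - 2 ∧
    (y ≠ 2 → Matrix.det (∑ j ∈ Finset.range n, (M : Matrix (Fin 2) (Fin 2) ℂ) ^ j)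
        = (T (n : ℤ) y - 2) / (y - 2)) := by
  have hd : (M : Matrix (Fin 2) (Fin 2) ℂ).det = 1 := M.det_coe
  generalize (M : Matrix (Fin 2) (Fin 2) ℂ) = A at *
  have htr : ∀ k : ℕ, (A ^ k).trace = T (k : ℤ) y ∧
      (A ^ (k + 1)).trace = T ((k : ℤ) + 1) y := by
    intro k
    induction k with
    | zero => simp [hT0, hT1, hy]
    | succ k ih =>
      refine ⟨by simpa using ih.2, ?_⟩
      have h2 : A ^ (k + 1 + 1) = y • A ^ (k + 1) - A ^ k := by
        have : A ^ (k + 1 + 1) = A ^ k * A ^ 2 := by rw [← pow_add]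
        rw [this, aux_sq A hd, hy, mul_sub, mul_one, Matrix.mul_smul, pow_succ]
      rw [h2, Matrix.trace_sub, Matrix.trace_smul, ih.1, ih.2, hTrec (((k + 1 : ℕ) : ℤ))]
      simp
  have key : (y - 2) * Matrix.det (∑ j ∈ Finset.range n, A ^ j) = T (n : ℤ) y - 2 := by
    have h1 := congrArg Matrix.det (mul_geom_sum A n)
    rw [Matrix.det_mul, aux_det_sub_one A hd, aux_det_sub_one (A ^ n) (by simp [hd]),
      (htr n).1, hy] at h1
    linear_combination -h1
  refine ⟨key, fun h => ?_⟩
  rw [eq_div_iff (sub_ne_zero.mpr h), ← key, mul_comm]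
end

section
/- Let n ≥ 2 be an integer. The set of complex numbers y with y ≠ 2 and T_n(y) = y is exactly the union of {2·cos(2kπ/(n+1)) : k an integer with 1 ≤ k < (n+1)/2}, {2·cos(2kπ/(n−1)) : k an integer with 1 ≤ k < (n−1)/2}, and, when n is odd, the single point {−2}. -/
lemma aux_T (T : ℤ → ℂ → ℂ)
    (hT0 : ∀ z : ℂ, T 0 z = 2)
    (hT1 : ∀ z : ℂ, T 1 z = z)
    (hTrec : ∀ (j : ℤ) (z : ℂ), T (j + 1) z = z * T j z - T (j - 1) z)
    (t : ℂ) (n : ℕ) : T (n : ℤ) (2 * Complex.cos t) = 2 * Complex.cos (n * t) ∧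
      T ((n : ℤ) + 1) (2 * Complex.cos t) = 2 * Complex.cos ((n + 1) * t) := by
  induction n with
  | zero => simp [hT0, hT1]
  | succ k ih =>
    obtain ⟨h1, h2⟩ := ih
    refine ⟨by push_cast; exact h2, ?_⟩
    push_cast
    rw [hTrec, h2, add_sub_cancel_right, h1]
    have e1 : ((k : ℂ) + 1 + 1) * t = (k + 1) * t + t := by ring
    have e2 : (k : ℂ) * t = (k + 1) * t - t := by ring
    rw [e1, e2, Complex.cos_add, Complex.cos_sub]
    ring

lemma aux_iff (t : ℂ) (n : ℕ) : (2 * Complex.cos (n * t) = 2 * Complex.cos t) ↔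
    ∃ k : ℤ, ((n : ℂ) + 1) * t = 2 * k * Real.pi ∨ ((n : ℂ) - 1) * t = 2 * k * Real.pi := by
  rw [mul_right_inj' two_ne_zero, Complex.cos_eq_cos_iff]
  constructor
  · rintro ⟨k, h | h⟩
    · exact ⟨-k, Or.inr (by push_cast; linear_combination -h)⟩
    · exact ⟨k, Or.inl (by linear_combination h)⟩
  · rintro ⟨k, h | h⟩
    · exact ⟨k, Or.inr (by linear_combination h)⟩
    · exact ⟨-k, Or.inl (by push_cast; linear_combination -h)⟩

lemma aux_red (m : ℕ) (hm : 0 < m) (k : ℤ) : ∃ r : ℤ, 0 ≤ r ∧ 2 * r ≤ m ∧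
    Real.cos (2 * k * Real.pi / m) = Real.cos (2 * r * Real.pi / m) := by
  have hm' : (m : ℝ) ≠ 0 := by positivity
  have hz : (0 : ℤ) < m := by exact_mod_cast hm
  have h0 := Int.emod_nonneg k hz.ne'
  have h1 := Int.emod_lt_of_pos k hz
  have h2 := Int.emod_add_mul_ediv k m
  have h3 : (k : ℝ) = (k % m : ℤ) + m * (k / m : ℤ) := by exact_mod_cast h2.symm
  by_cases h : 2 * (k % m) ≤ m
  · refine ⟨k % m, h0, h, ?_⟩
    rw [Real.cos_eq_cos_iff]
    refine ⟨-(k / m), Or.inl ?_⟩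
    rw [h3]; push_cast; field_simp; ring
  · refine ⟨m - k % m, by omega, by omega, ?_⟩
    rw [Real.cos_eq_cos_iff]
    refine ⟨k / m + 1, Or.inr ?_⟩
    rw [h3]; push_cast; field_simp; ring

lemma aux_ne (m : ℕ) (k : ℤ) (hk : 1 ≤ k) (h : 2 * k < m) :
    ((2 * Real.cos (2 * k * Real.pi / m) : ℝ) : ℂ) ≠ 2 := by
  have hk' : (1 : ℝ) ≤ k := by exact_mod_cast hk
  have h' : (2 : ℝ) * k < m := by exact_mod_cast h
  have hm : (0 : ℝ) < m := by linarith
  have hp := Real.pi_pos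
  have := Real.cos_lt_cos_of_nonneg_of_le_pi (x := 0) (y := 2 * k * Real.pi / m) le_rfl
    (by rw [div_le_iff₀ hm]; nlinarith) (by positivity)
  rw [Real.cos_zero] at this
  intro h2
  have : 2 * Real.cos (2 * k * Real.pi / m) = 2 := by exact_mod_cast h2
  linarith

lemma aux_fwd (m : ℕ) (hm : 0 < m) (k : ℤ) (t : ℂ) (h : (m : ℂ) * t = 2 * k * Real.pi)
    (h2 : 2 * Complex.cos t ≠ 2) :
    (∃ r : ℤ, 1 ≤ r ∧ 2 * r < m ∧
      2 * Complex.cos t = ((2 * Real.cos (2 * r * Real.pi / m) : ℝ) : ℂ)) ∨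
    (Even m ∧ 2 * Complex.cos t = -2) := by
  have hm' : (m : ℂ) ≠ 0 := by exact_mod_cast hm.ne'
  have ht : t = ((2 * k * Real.pi / m : ℝ) : ℂ) := by
    push_cast; rw [eq_div_iff hm', mul_comm, h]
  obtain ⟨r, hr0, hr1, hr⟩ := aux_red m hm k
  have hc : 2 * Complex.cos t = ((2 * Real.cos (2 * r * Real.pi / m) : ℝ) : ℂ) := by
    rw [← hr, ht]; push_cast; rfl
  rcases hr0.eq_or_lt with h0 | h0
  · subst h0
    exact absurd (by rw [hc]; simp) h2
  rcases hr1.eq_or_lt with h1 | h1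
  · refine Or.inr ⟨by rw [Nat.even_iff]; omega, ?_⟩
    have h1' : (2 : ℝ) * r = m := by exact_mod_cast h1
    have : (m : ℝ) ≠ 0 := by positivity
    rw [hc, h1', mul_div_right_comm, div_self this]; simp
  · exact Or.inl ⟨r, h0, h1, hc⟩


/-- For an integer `n ≥ 2`, the set of complex numbers
`y ≠ 2` with `T n y = y` is exactly the union of
`{2 cos (2kπ/(n+1)) : k ∈ ℤ, 1 ≤ k < (n+1)/2}`,
`{2 cos (2kπ/(n-1)) : k ∈ ℤ, 1 ≤ k < (n-1)/2}`, and, when `n` is odd, the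
single point `{-2}`.  Here the `T j` are the Chebyshev-like polynomials with
`T 0 = 2`, `T 1 = y` and `T (j+1) = y * T j - T (j-1)`. -/
theorem Tn_eq_self_solutions
    (T : ℤ → ℂ → ℂ)
    (hT0 : ∀ z : ℂ, T 0 z = 2)
    (hT1 : ∀ z : ℂ, T 1 z = z)
    (hTrec : ∀ (j : ℤ) (z : ℂ), T (j + 1) z = z * T j z - T (j - 1) z)
    (n : ℕ) (hn : 2 ≤ n) :
    {y : ℂ | y ≠ 2 ∧ T (n : ℤ) y = y}
      = {y : ℂ | ∃ k : ℤ, 1 ≤ k ∧ 2 * k < (n : ℤ) + 1 ∧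
            y = ((2 * Real.cos (2 * k * Real.pi / (n + 1)) : ℝ) : ℂ)}
        ∪ {y : ℂ | ∃ k : ℤ, 1 ≤ k ∧ 2 * k < (n : ℤ) - 1 ∧
            y = ((2 * Real.cos (2 * k * Real.pi / (n - 1 : ℕ)) : ℝ) : ℂ)}
        ∪ (if Odd n then ({-2} : Set ℂ) else ∅) := by

  have key : ∀ t : ℂ, T (n : ℤ) (2 * Complex.cos t) = 2 * Complex.cos t ↔
      ∃ k : ℤ, ((n : ℂ) + 1) * t = 2 * k * Real.pi ∨ ((n : ℂ) - 1) * t = 2 * k * Real.pi :=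
    fun t => by rw [(aux_T T hT0 hT1 hTrec t n).1]; exact aux_iff t n
  have hc : ((n - 1 : ℕ) : ℂ) = (n : ℂ) - 1 := by rw [Nat.cast_sub (by omega : 1 ≤ n), Nat.cast_one]
  have hcz : ((n - 1 : ℕ) : ℤ) = (n : ℤ) - 1 := by omega
  have hn0 : ((n + 1 : ℕ) : ℂ) ≠ 0 := Nat.cast_ne_zero.2 (by omega)
  have hn1 : ((n - 1 : ℕ) : ℂ) ≠ 0 := Nat.cast_ne_zero.2 (by omega)
  ext y
  simp only [Set.mem_ofPred_eq, Set.mem_union]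
  constructor
  · rintro ⟨hy, hT⟩
    obtain ⟨t, ht⟩ := Complex.cos_surjective (y / 2)
    obtain rfl : y = 2 * Complex.cos t := by rw [ht]; ring
    obtain ⟨k, h | h⟩ := (key t).1 hT
    · rcases aux_fwd (n + 1) (by omega) k t (by push_cast; exact h) hy with ⟨r, a, b, c⟩ | ⟨a, b⟩
      · exact Or.inl (Or.inl ⟨r, a, by exact_mod_cast b, by rw [c]; push_cast; rfl⟩)
      · right
        have : Odd n := by rw [Nat.odd_iff]; rw [Nat.even_iff] at a; omega
        rw [if_pos this]; exact b
    · rcases aux_fwd (n - 1) (by omega) k t (by rw [hc]; exact h) hy with ⟨r, a, b, c⟩ | ⟨a, b⟩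
      · exact Or.inl (Or.inr ⟨r, a, by omega, c⟩)
      · right
        have : Odd n := by rw [Nat.odd_iff]; rw [Nat.even_iff] at a; omega
        rw [if_pos this]; exact b
  · rintro ((⟨k, a, b, rfl⟩ | ⟨k, a, b, rfl⟩) | h)
    · have hne := aux_ne (n + 1) k a (by push_cast; exact b)
      refine ⟨by push_cast at hne ⊢; exact hne, ?_⟩
      have := (key ((2 * k * Real.pi / (n + 1 : ℕ) : ℝ) : ℂ)).2 ⟨k, Or.inl (by
        push_cast at hn0 ⊢; field_simp)⟩
      push_cast at this ⊢; exact this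
    · have hne := aux_ne (n - 1) k a (by omega)
      refine ⟨hne, ?_⟩
      have := (key ((2 * k * Real.pi / (n - 1 : ℕ) : ℝ) : ℂ)).2 ⟨k, Or.inr (by
        rw [← hc]; simp only [Complex.ofReal_div, Complex.ofReal_natCast]
        rw [mul_div_cancel₀ _ hn1]; push_cast; rfl)⟩
      simpa using this
    · split_ifs at h with ho
      · obtain rfl : y = -2 := h
        obtain ⟨j, rfl⟩ := ho
        refine ⟨by norm_num, ?_⟩
        have := (key (Real.pi : ℂ)).2 ⟨j, Or.inr (by push_cast; ring)⟩
        simpa using this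
      · exact absurd h (Set.notMem_empty _)
end

section
/- Let n > 1 be an integer and define R_even(x,y) = (y+1)·S_{n−1}(y)² − S_n(y)² − 2·S_{n−1}(y)·S_n(y) + x²·S_{n−1}(y)·(S_n(y) − S_{n−1}(y)). Then the set of pairs (x,y) ∈ ℂ² satisfying y ≠ 2, T_n(y) = 2, and R_even(x,y) = 0 is finite and has exactly 1 + (−1)^n elements (i.e., 2 elements if n is even and 0 elements if n is odd). -/
/-- For an integer `n > 1`, define
`R_even x y = (y+1)*S (n-1) y ^ 2 - S n y ^ 2 - 2*S (n-1) y*S n y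
  + x²*S (n-1) y*(S n y - S (n-1) y)`.
Then the set of `(x, y) ∈ ℂ²` with `y ≠ 2`, `T n y = 2` and
`R_even x y = 0` is finite and has exactly `1 + (-1)^n` elements.  Here `S`
and `T` are the Chebyshev-like polynomial families with `S 0 = 1`, `S 1 = z`,
`T 0 = 2`, `T 1 = z` and the common recurrence `f (j+1) = z * f j - f (j-1)`. -/
theorem twist_even_genus_card
    (S T : ℤ → ℂ → ℂ)
    (hS0 : ∀ z : ℂ, S 0 z = 1)
    (hS1 : ∀ z : ℂ, S 1 z = z)
    (hSrec : ∀ (j : ℤ) (z : ℂ), S (j + 1) z = z * S j z - S (j - 1) z)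
    (hT0 : ∀ z : ℂ, T 0 z = 2)
    (hT1 : ∀ z : ℂ, T 1 z = z)
    (hTrec : ∀ (j : ℤ) (z : ℂ), T (j + 1) z = z * T j z - T (j - 1) z)
    (n : ℕ) (hn : 1 < n)
    (Reven : ℂ → ℂ → ℂ)
    (hReven : ∀ x y : ℂ, Reven x y
        = (y + 1) * S ((n : ℤ) - 1) y ^ 2 - S (n : ℤ) y ^ 2
          - 2 * S ((n : ℤ) - 1) y * S (n : ℤ) y
          + x ^ 2 * S ((n : ℤ) - 1) y * (S (n : ℤ) y - S ((n : ℤ) - 1) y)) :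
    Set.Finite {p : ℂ × ℂ | p.2 ≠ 2 ∧ T (n : ℤ) p.2 = 2 ∧ Reven p.1 p.2 = 0} ∧
    (Set.ncard {p : ℂ × ℂ | p.2 ≠ 2 ∧ T (n : ℤ) p.2 = 2 ∧ Reven p.1 p.2 = 0} : ℤ)
      = 1 + (-1) ^ n := by
  have key : ∀ (y : ℂ) (k : ℕ),
      S (k : ℤ) y ^ 2 + S ((k : ℤ) - 1) y ^ 2 - y * S ((k : ℤ) - 1) y * S (k : ℤ) y = 1 ∧
      T (k : ℤ) y = 2 * S (k : ℤ) y - y * S ((k : ℤ) - 1) y ∧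
      T ((k : ℤ) - 1) y = y * S (k : ℤ) y + (2 - y ^ 2) * S ((k : ℤ) - 1) y := by
    intro y k
    induction k with
    | zero =>
      have h1 := hSrec 0 y
      have h2 := hTrec 0 y
      simp only [zero_add, zero_sub, hS0, hS1, hT0, hT1] at h1 h2
      have h3 : S (-1) y = 0 := by linear_combination h1
      have h4 : T (-1) y = y := by linear_combination h2
      simp [h3, h4, hS0, hT0]
    | succ k ih =>
      obtain ⟨a, b, c⟩ := ih
      have h1 := hSrec k y
      have h2 := hTrec k y
      push_cast
      rw [add_sub_cancel_right, h1, h2]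
      refine ⟨?_, ?_, ?_⟩
      · linear_combination a
      · rw [b, c]; ring
      · rw [b]; ring
  have km2 : ∀ k : ℕ, S (k : ℤ) (-2) = (-1) ^ k * (k + 1) ∧
      S ((k : ℤ) - 1) (-2) = - (-1) ^ k * k := by
    intro k
    induction k with
    | zero =>
      have h1 := hSrec 0 (-2)
      simp only [zero_add, zero_sub, hS0, hS1] at h1
      have h3 : S (-1) (-2) = 0 := by linear_combination h1
      simp [h3, hS0]
    | succ k ih =>
      obtain ⟨a, b⟩ := ih
      have h1 := hSrec k (-2)
      push_cast
      rw [add_sub_cancel_right, h1, a, b]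
      constructor <;> ring
  have main : ∀ x y : ℂ, (y ≠ 2 ∧ T (n : ℤ) y = 2 ∧ Reven x y = 0) ↔
      (y = -2 ∧ Even n ∧ (n * (2 * n + 1) : ℂ) * x ^ 2 = -1) := by
    intro x y
    obtain ⟨a, b, -⟩ := key y n
    obtain ⟨p, q⟩ := km2 n
    constructor
    · rintro ⟨h2, hT, hR⟩
      rw [hReven] at hR
      rw [hT] at b
      have h0 : S ((n : ℤ) - 1) y ^ 2 * ((2 - y) * (2 + y)) = 0 := by
        linear_combination 4 * a + (2 * S (n : ℤ) y - y * S ((n : ℤ) - 1) y + 2) * b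
      have hs : ¬ S ((n : ℤ) - 1) y = 0 := by
        intro hs
        rw [hs] at b hR
        have ht : S (n : ℤ) y = 1 := by linear_combination -b / 2
        rw [ht] at hR
        norm_num at hR
      have hy : y = -2 := by
        rcases mul_eq_zero.1 h0 with h | h
        · exact absurd (pow_eq_zero_iff (two_ne_zero) |>.1 h) hs
        · rcases mul_eq_zero.1 h with h | h
          · exact absurd (by linear_combination -h) h2
          · linear_combination h
      subst hy
      rw [p, q] at b hR
      rcases Nat.even_or_odd n with he | ho
      · refine ⟨rfl, he, ?_⟩
        rw [he.neg_one_pow] at hR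
        linear_combination -hR
      · rw [ho.neg_one_pow] at b
        exfalso
        have : (4 : ℂ) = 0 := by linear_combination b
        norm_num at this
    · rintro ⟨rfl, he, hx⟩
      rw [p, q, he.neg_one_pow] at b
      refine ⟨by norm_num, by rw [b]; ring, ?_⟩
      rw [hReven, p, q, he.neg_one_pow]
      linear_combination -hx
  simp only [main]
  rcases Nat.even_or_odd n with he | ho
  · have hN : (n * (2 * n + 1) : ℂ) ≠ 0 := by
      have : n * (2 * n + 1) ≠ 0 := by positivity
      exact_mod_cast this
    obtain ⟨c, hc⟩ := IsAlgClosed.exists_pow_nat_eq (-1 / (n * (2 * n + 1)) : ℂ) two_pos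
    have hc' : (n * (2 * n + 1) : ℂ) * c ^ 2 = -1 := by rw [hc]; rw [mul_div_assoc', mul_div_cancel_left₀ _ hN]
    have hc0 : c ≠ 0 := by
      rintro rfl
      norm_num at hc'
    have hset : {p : ℂ × ℂ | p.2 = -2 ∧ Even n ∧ (n * (2 * n + 1) : ℂ) * p.1 ^ 2 = -1}
        = {(c, -2), (-c, -2)} := by
      ext ⟨x, y⟩
      simp only [Set.mem_ofPred_eq, Set.mem_insert_iff, Set.mem_singleton_iff, Prod.mk.injEq]
      constructor
      · rintro ⟨rfl, -, hx⟩
        have : x ^ 2 = c ^ 2 := mul_left_cancel₀ hN (hx.trans hc'.symm)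
        rcases sq_eq_sq_iff_eq_or_eq_neg.1 this with h | h
        · exact Or.inl ⟨h, rfl⟩
        · exact Or.inr ⟨h, rfl⟩
      · rintro (⟨rfl, rfl⟩ | ⟨rfl, rfl⟩)
        · exact ⟨rfl, he, hc'⟩
        · exact ⟨rfl, he, by rw [neg_sq]; exact hc'⟩
    rw [hset]
    refine ⟨Set.toFinite _, ?_⟩
    rw [Set.ncard_pair, he.neg_one_pow]
    · norm_num
    · intro h
      have h1 : c = -c := congrArg Prod.fst h
      exact hc0 (by linear_combination h1 / 2)
  · have : ¬ Even n := Nat.not_even_iff_odd.2 ho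
    simp [this, ho.neg_one_pow]
end

section
/- Let n > 1 be an integer and define R_odd(x,y) = −(y+1)·S_{n−1}(y)² + S_{n−2}(y)² + 2·S_{n−1}(y)·S_{n−2}(y) + x²·S_{n−1}(y)·(S_{n−1}(y) − S_{n−2}(y)). Then the set of pairs (x,y) ∈ ℂ² satisfying y ≠ 2, T_n(y) = y, and R_odd(x,y) = 0 is finite and has exactly 2n − 2 − cₙ − dₙ − eₙ elements, where cₙ = 1 if n ≡ 1 (mod 3) and cₙ = 0 otherwise, dₙ = 2 if n ≡ 5 (mod 6) and dₙ = 0 otherwise, and eₙ = 2 if n ≡ 4 (mod 5) and eₙ = 0 otherwise. -/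
/-- Points of the form `t + t⁻¹` with `t ^ m = 1`, `t ^ 2 ≠ 1`. -/
def QQ (m : ℕ) (y : ℂ) : Prop := ∃ t : ℂ, t ^ m = 1 ∧ t ^ 2 ≠ 1 ∧ y = t + t⁻¹

lemma QQ_card (m : ℕ) (hm : 0 < m) :
    ∃ C : Finset ℂ, C.card = (m - 1) / 2 ∧ ∀ y, y ∈ C ↔ QQ m y := by
  obtain ⟨ζ, hζ⟩ : ∃ ζ : ℂ, IsPrimitiveRoot ζ m := ⟨_, Complex.isPrimitiveRoot_exp m hm.ne'⟩
  have hζ0 : ζ ≠ 0 := hζ.ne_zero hm.ne'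
  have hnot : ∀ k : ℕ, 0 < k → k < m → ζ ^ k ≠ 1 := fun k h0 h1 h =>
    absurd (Nat.le_of_dvd h0 (hζ.dvd_of_pow_eq_one k h)) (by omega)
  refine ⟨(Finset.Ico 1 ((m + 1) / 2)).image (fun k : ℕ => ζ ^ k + (ζ ^ k)⁻¹), ?_, ?_⟩
  · rw [Finset.card_image_of_injOn]
    · simp; omega
    · intro i hi j hj hij
      simp only [Finset.coe_Ico, Set.mem_Ico] at hi hj
      have hi0 : ζ ^ i ≠ 0 := pow_ne_zero _ hζ0
      have hj0 : ζ ^ j ≠ 0 := pow_ne_zero _ hζ0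
      simp only at hij
      have h1 : (ζ ^ i - ζ ^ j) * (ζ ^ (i + j) - 1) = 0 := by
        rw [pow_add]
        field_simp at hij
        linear_combination hij
      rcases mul_eq_zero.mp h1 with h | h
      · exact hζ.pow_inj (by omega) (by omega) (sub_eq_zero.mp h)
      · exact absurd (sub_eq_zero.mp h) (hnot _ (by omega) (by omega))
  · intro y
    simp only [Finset.mem_image, Finset.mem_Ico]
    constructor
    · rintro ⟨k, hk, rfl⟩
      refine ⟨ζ ^ k, ?_, ?_, rfl⟩
      · rw [← pow_mul, mul_comm, pow_mul, hζ.pow_eq_one, one_pow]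
      · rw [← pow_mul]
        exact hnot _ (by omega) (by omega)
    · rintro ⟨t, ht, ht2, rfl⟩
      have : NeZero m := ⟨hm.ne'⟩
      obtain ⟨i, hi, rfl⟩ := hζ.eq_pow_of_pow_eq_one ht
      have hi0 : i ≠ 0 := by rintro rfl; simp at ht2
      have him : i * 2 ≠ m := by
        intro h
        rw [← pow_mul, h, hζ.pow_eq_one] at ht2
        exact ht2 rfl
      by_cases h : 2 * i < m
      · exact ⟨i, by omega, rfl⟩
      · refine ⟨m - i, by omega, ?_⟩
        have : ζ ^ (m - i) = (ζ ^ i)⁻¹ := by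
          apply eq_inv_of_mul_eq_one_left
          rw [← pow_add, Nat.sub_add_cancel hi.le, hζ.pow_eq_one]
        rw [this, inv_inv, add_comm]

lemma exists_t (y : ℂ) : ∃ t : ℂ, t ≠ 0 ∧ y = t + t⁻¹ := by
  obtain ⟨s, hs⟩ := IsAlgClosed.exists_pow_nat_eq (y ^ 2 - 4) (n := 2) (by norm_num)
  have h : (y + s) / 2 ≠ 0 := by
    intro h
    have : (y + s) * (y - s) = 0 := by
      rw [show y + s = 0 by linear_combination 2 * h]; ring
    have h4 : (4 : ℂ) = 0 := by linear_combination this + hs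
    norm_num at h4
  refine ⟨(y + s) / 2, h, ?_⟩
  have h' : y + s ≠ 0 := by intro h2; apply h; rw [h2]; simp
  field_simp
  linear_combination -hs

lemma QQ_neg_one (m : ℕ) : QQ m (-1) ↔ 3 ∣ m := by
  have key : ∀ t : ℂ, t ≠ 0 → -1 = t + t⁻¹ → (t ^ m = 1 ↔ 3 ∣ m) ∧ t ^ 2 ≠ 1 := by
    intro t h0 h
    have h2 : t ^ 2 + t + 1 = 0 := by field_simp at h; linear_combination -h
    have h3 : t ^ 3 = 1 := by linear_combination (t - 1) * h2
    have h1 : t ≠ 1 := by rintro rfl; norm_num at h2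
    have : Fact (Nat.Prime 3) := ⟨by norm_num⟩
    have ho := orderOf_eq_prime h3 h1
    refine ⟨?_, ?_⟩
    · rw [← orderOf_dvd_iff_pow_eq_one, ho]
    · rw [Ne, ← orderOf_dvd_iff_pow_eq_one, ho]; norm_num
  constructor
  · rintro ⟨t, ht, ht2, h⟩
    have h0 : t ≠ 0 := by rintro rfl; simp at h
    exact ((key t h0 h).1).1 ht
  · intro hm
    obtain ⟨t, h0, h⟩ := exists_t (-1)
    exact ⟨t, (key t h0 h).1.2 hm, (key t h0 h).2, h⟩

lemma QQ_one (m : ℕ) : QQ m 1 ↔ 6 ∣ m := by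
  have key : ∀ t : ℂ, t ≠ 0 → 1 = t + t⁻¹ → (t ^ m = 1 ↔ 6 ∣ m) ∧ t ^ 2 ≠ 1 := by
    intro t h0 h
    have h2 : t ^ 2 - t + 1 = 0 := by field_simp at h; linear_combination -h
    have h3 : t ^ 3 = -1 := by linear_combination (t + 1) * h2
    have h6 : t ^ 6 = 1 := by linear_combination (t ^ 3 - 1) * h3
    have n2 : t ^ 2 ≠ 1 := by
      intro h
      have : t = 2 := by linear_combination h - h2
      rw [this] at h2; norm_num at h2
    have ho : orderOf t = 6 := by
      rw [orderOf_eq_iff (by norm_num)]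
      refine ⟨h6, fun k hk hk0 hh => ?_⟩
      have n3 : t ^ 3 ≠ 1 := by rw [h3]; norm_num
      interval_cases k
      · exact n2 (by rw [pow_one] at hh; rw [hh]; norm_num)
      · exact n2 hh
      · exact n3 hh
      · exact n2 (by linear_combination h6 - t ^ 2 * hh)
      · exact n2 (by
          have : t = 1 := by linear_combination h6 - t * hh
          rw [this]; norm_num)
    exact ⟨by rw [← orderOf_dvd_iff_pow_eq_one, ho], n2⟩
  constructor
  · rintro ⟨t, ht, ht2, h⟩
    have h0 : t ≠ 0 := by rintro rfl; simp at h
    exact ((key t h0 h).1).1 ht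
  · intro hm
    obtain ⟨t, h0, h⟩ := exists_t 1
    exact ⟨t, (key t h0 h).1.2 hm, (key t h0 h).2, h⟩

lemma QQ_five (m : ℕ) (y : ℂ) (hy : y ^ 2 + y - 1 = 0) : QQ m y ↔ 5 ∣ m := by
  have key : ∀ t : ℂ, t ≠ 0 → y = t + t⁻¹ → (t ^ m = 1 ↔ 5 ∣ m) ∧ t ^ 2 ≠ 1 := by
    intro t h0 h
    have h2 : t ^ 4 + t ^ 3 + t ^ 2 + t + 1 = 0 := by
      rw [h] at hy; field_simp at hy; linear_combination hy
    have h3 : t ^ 5 = 1 := by linear_combination (t - 1) * h2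
    have h1 : t ≠ 1 := by rintro rfl; norm_num at h2
    have : Fact (Nat.Prime 5) := ⟨by norm_num⟩
    have ho := orderOf_eq_prime h3 h1
    refine ⟨?_, ?_⟩
    · rw [← orderOf_dvd_iff_pow_eq_one, ho]
    · rw [Ne, ← orderOf_dvd_iff_pow_eq_one, ho]; norm_num
  have hy0 : y ≠ 0 := by rintro rfl; norm_num at hy
  constructor
  · rintro ⟨t, ht, ht2, h⟩
    have h0 : t ≠ 0 := by rintro rfl; simp at h; exact hy0 h
    exact ((key t h0 h).1).1 ht
  · intro hm
    obtain ⟨t, h0, h⟩ := exists_t y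
    exact ⟨t, (key t h0 h).1.2 hm, (key t h0 h).2, h⟩

lemma QQ_ne_neg_two (m : ℕ) : ¬ QQ m (-2) := by
  rintro ⟨t, ht, ht2, h⟩
  have h0 : t ≠ 0 := by rintro rfl; simp at h
  have h1 : (t + 1) ^ 2 = 0 := by field_simp at h; linear_combination -h
  have h2 : t = -1 := by
    have := pow_eq_zero_iff (two_ne_zero) |>.mp h1
    linear_combination this
  apply ht2; rw [h2]; norm_num

open Classical in
lemma fiber (a b : ℂ) (hab : a ≠ 0 ∨ b ≠ 0) : ∃ F : Finset ℂ,
    (∀ x, x ∈ F ↔ a * x ^ 2 + b = 0) ∧ F.card = if a = 0 then 0 else if b = 0 then 1 else 2 := by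
  by_cases ha : a = 0
  · refine ⟨∅, ?_, by simp [ha]⟩
    intro x; simp [ha]; tauto
  obtain ⟨s, hs⟩ := IsAlgClosed.exists_pow_nat_eq (-b / a) (n := 2) (by norm_num)
  have hb : b = - (a * s ^ 2) := by rw [hs]; field_simp
  refine ⟨{s, -s}, ?_, ?_⟩
  · intro x
    have : a * x ^ 2 + b = a * ((x - s) * (x + s)) := by rw [hb]; ring
    rw [this]
    simp [ha, sub_eq_zero, add_eq_zero_iff_eq_neg]
  · rw [if_neg ha]
    by_cases hb0 : b = 0
    · have : s = 0 := by
        rw [hb0] at hs; simpa using hs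
      simp [hb0, this]
    · rw [if_neg hb0, Finset.card_pair]
      intro h
      have : s = 0 := by linear_combination h / 2
      apply hb0; rw [hb, this]; simp

open Classical in
lemma total (Y : Finset ℂ) (a b : ℂ → ℂ) (hab : ∀ y ∈ Y, a y ≠ 0 ∨ b y ≠ 0) :
    Set.Finite {p : ℂ × ℂ | p.2 ∈ Y ∧ a p.2 * p.1 ^ 2 + b p.2 = 0} ∧
    Set.ncard {p : ℂ × ℂ | p.2 ∈ Y ∧ a p.2 * p.1 ^ 2 + b p.2 = 0}
      = ∑ y ∈ Y, if a y = 0 then 0 else if b y = 0 then 1 else 2 := by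
  have : ∀ y, ∃ F : Finset ℂ, y ∈ Y → (∀ x, x ∈ F ↔ a y * x ^ 2 + b y = 0) ∧
      F.card = if a y = 0 then 0 else if b y = 0 then 1 else 2 := by
    intro y
    by_cases h : y ∈ Y
    · obtain ⟨F, hF⟩ := fiber (a y) (b y) (hab y h)
      exact ⟨F, fun _ => hF⟩
    · exact ⟨∅, fun h' => absurd h' h⟩
  choose F hF using this
  have hset : {p : ℂ × ℂ | p.2 ∈ Y ∧ a p.2 * p.1 ^ 2 + b p.2 = 0} =
      ((Y.biUnion fun y => (F y).image fun x => (x, y) : Finset (ℂ × ℂ)) : Set (ℂ × ℂ)) := by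
    ext ⟨x, y⟩
    simp only [Set.mem_ofPred_eq, Finset.coe_biUnion, Finset.coe_image, Set.mem_iUnion,
      Set.mem_image, Finset.mem_coe, Prod.mk.injEq]
    constructor
    · rintro ⟨h, h2⟩
      exact ⟨y, h, x, ((hF y h).1 x).2 h2, rfl, rfl⟩
    · rintro ⟨y', h, x', hx, rfl, rfl⟩
      exact ⟨h, ((hF _ h).1 _).1 hx⟩
  rw [hset]
  refine ⟨Finset.finite_toSet _, ?_⟩
  rw [Set.ncard_coe_finset, Finset.card_biUnion]
  · refine Finset.sum_congr rfl fun y hy => ?_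
    rw [← (hF y hy).2, Finset.card_image_of_injective]
    intro u v h
    simpa using h
  · intro y _ z _ hyz
    rw [Function.onFun, Finset.disjoint_left]
    rintro ⟨u, v⟩ h1 h2
    simp only [Finset.mem_image, Prod.mk.injEq] at h1 h2
    obtain ⟨_, _, _, rfl⟩ := h1
    obtain ⟨_, _, _, rfl⟩ := h2
    exact hyz rfl

lemma golden : ∃ r s : ℂ, r ≠ s ∧ ∀ y : ℂ, y ^ 2 + y - 1 = 0 ↔ y = r ∨ y = s := by
  obtain ⟨q, hq⟩ := IsAlgClosed.exists_pow_nat_eq (5 : ℂ) (n := 2) (by norm_num)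
  refine ⟨(-1 + q) / 2, (-1 - q) / 2, ?_, ?_⟩
  · intro h
    have : q = 0 := by linear_combination h
    rw [this] at hq; norm_num at hq
  · intro y
    have : y ^ 2 + y - 1 = (y - (-1 + q) / 2) * (y - (-1 - q) / 2) := by
      linear_combination hq / 4
    rw [this, mul_eq_zero, sub_eq_zero, sub_eq_zero]

open Classical in
lemma sumA (m : ℕ) (hm : 0 < m) : ∃ C : Finset ℂ, (∀ y, y ∈ C ↔ QQ m y) ∧
    (∑ y ∈ C, if y = -1 then 1 else 2) + (if 3 ∣ m then 1 else 0) = 2 * ((m - 1) / 2) := by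
  obtain ⟨C, hc, hC⟩ := QQ_card m hm
  refine ⟨C, hC, ?_⟩
  have : (if 3 ∣ m then 1 else 0) = ∑ y ∈ C, if y = -1 then 1 else 0 := by
    rw [Finset.sum_ite_eq' C (-1) (fun _ => 1)]
    simp only [hC, QQ_neg_one]
  rw [this, ← Finset.sum_add_distrib, ← hc, mul_comm, ← smul_eq_mul, ← Finset.sum_const]
  refine Finset.sum_congr rfl fun y _ => ?_
  split_ifs <;> rfl

open Classical in
lemma sumB (m : ℕ) (hm : 0 < m) : ∃ C : Finset ℂ, (∀ y, y ∈ C ↔ QQ m y) ∧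
    (∑ y ∈ C, if y = 1 then 0 else if y ^ 2 + y - 1 = 0 then 1 else 2)
      + (if 6 ∣ m then 2 else 0) + (if 5 ∣ m then 2 else 0) = 2 * ((m - 1) / 2) := by
  obtain ⟨C, hc, hC⟩ := QQ_card m hm
  obtain ⟨r, s, hrs, hg⟩ := golden
  refine ⟨C, hC, ?_⟩
  have h6 : (if 6 ∣ m then 2 else 0) = ∑ y ∈ C, if y = 1 then 2 else 0 := by
    rw [Finset.sum_ite_eq' C 1 (fun _ => 2)]
    simp only [hC, QQ_one]
  have h5 : (if 5 ∣ m then 2 else 0) =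
      ∑ y ∈ C, ((if y = r then 1 else 0) + if y = s then 1 else 0) := by
    rw [Finset.sum_add_distrib, Finset.sum_ite_eq' C r (fun _ => 1),
      Finset.sum_ite_eq' C s (fun _ => 1)]
    simp only [hC, QQ_five m r ((hg r).2 (Or.inl rfl)), QQ_five m s ((hg s).2 (Or.inr rfl))]
    split_ifs <;> rfl
  rw [h6, h5, ← Finset.sum_add_distrib, ← Finset.sum_add_distrib, ← hc, mul_comm, ← smul_eq_mul,
    ← Finset.sum_const]
  refine Finset.sum_congr rfl fun y _ => ?_
  have h1 : ¬ ((1 : ℂ) ^ 2 + 1 - 1 = 0) := by norm_num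
  by_cases hy : y = 1
  · subst hy
    rw [hg] at h1
    push Not at h1
    simp [h1.1, h1.2]
  · by_cases hy1 : y = r
    · have : r ≠ 1 := hy1 ▸ hy
      simp [hg, hy1, hrs, this]
    · by_cases hy2 : y = s
      · have : s ≠ 1 := hy2 ▸ hy
        simp [hg, hy2, hrs.symm, this]
      · simp [hg, hy, hy1, hy2]

/-- For an integer `n > 1`, define
`R_odd x y = -(y+1)*S (n-1) y ^ 2 + S (n-2) y ^ 2 + 2*S (n-1) y*S (n-2) y
  + x²*S (n-1) y*(S (n-1) y - S (n-2) y)`.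
Then the set of `(x, y) ∈ ℂ²` with `y ≠ 2`, `T n y = y` and `R_odd x y = 0`
is finite and has exactly `2n - 2 - cₙ - dₙ - eₙ` elements, where `cₙ = 1` if
`n ≡ 1 (mod 3)` and `cₙ = 0` otherwise, `dₙ = 2` if `n ≡ 5 (mod 6)` and
`dₙ = 0` otherwise, and `eₙ = 2` if `n ≡ 4 (mod 5)` and `eₙ = 0` otherwise.
Here `S` and `T` are the Chebyshev-like polynomial families with `S 0 = 1`,
`S 1 = z`, `T 0 = 2`, `T 1 = z` and the common recurrence
`f (j+1) = z * f j - f (j-1)`. -/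
theorem twist_odd_fiberedness_card
    (S T : ℤ → ℂ → ℂ)
    (hS0 : ∀ z : ℂ, S 0 z = 1)
    (hS1 : ∀ z : ℂ, S 1 z = z)
    (hSrec : ∀ (j : ℤ) (z : ℂ), S (j + 1) z = z * S j z - S (j - 1) z)
    (hT0 : ∀ z : ℂ, T 0 z = 2)
    (hT1 : ∀ z : ℂ, T 1 z = z)
    (hTrec : ∀ (j : ℤ) (z : ℂ), T (j + 1) z = z * T j z - T (j - 1) z)
    (n : ℕ) (hn : 1 < n)
    (Rodd : ℂ → ℂ → ℂ)
    (hRodd : ∀ x y : ℂ, Rodd x y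
        = -((y + 1) * S ((n : ℤ) - 1) y ^ 2) + S ((n : ℤ) - 2) y ^ 2
          + 2 * S ((n : ℤ) - 1) y * S ((n : ℤ) - 2) y
          + x ^ 2 * S ((n : ℤ) - 1) y * (S ((n : ℤ) - 1) y - S ((n : ℤ) - 2) y))
    (c d e : ℕ)
    (hc : c = if n % 3 = 1 then 1 else 0)
    (hd : d = if n % 6 = 5 then 2 else 0)
    (he : e = if n % 5 = 4 then 2 else 0) :
    Set.Finite {p : ℂ × ℂ | p.2 ≠ 2 ∧ T (n : ℤ) p.2 = p.2 ∧ Rodd p.1 p.2 = 0} ∧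
    Set.ncard {p : ℂ × ℂ | p.2 ≠ 2 ∧ T (n : ℤ) p.2 = p.2 ∧ Rodd p.1 p.2 = 0}
      = 2 * n - 2 - c - d - e := by
  obtain ⟨k, rfl⟩ : ∃ k, n = k + 2 := ⟨n - 2, by omega⟩
  have e1 : (((k + 2 : ℕ) : ℤ) - 1) = ((k + 1 : ℕ) : ℤ) := by push_cast; ring
  have e2 : (((k + 2 : ℕ) : ℤ) - 2) = (k : ℤ) := by push_cast; ring
  rw [e1, e2] at hRodd
  have sS : ∀ (j : ℕ) (z : ℂ), S ((j + 2 : ℕ) : ℤ) z = z * S ((j + 1 : ℕ) : ℤ) z - S (j : ℤ) z := by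
    intro j z
    have := hSrec ((j + 1 : ℕ) : ℤ) z
    convert this using 3 <;> push_cast <;> ring
  have sT : ∀ (j : ℕ) (z : ℂ), T ((j + 2 : ℕ) : ℤ) z = z * T ((j + 1 : ℕ) : ℤ) z - T (j : ℤ) z := by
    intro j z
    have := hTrec ((j + 1 : ℕ) : ℤ) z
    convert this using 3 <;> push_cast <;> ring
  have fT : ∀ (t : ℂ), t ≠ 0 → ∀ j : ℕ, T (j : ℤ) (t + t⁻¹) * t ^ j = (t ^ j) ^ 2 + 1 := by
    intro t ht j
    induction j using Nat.twoStepInduction with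
    | zero => simp [hT0]; norm_num
    | one => simp [hT1]; field_simp
    | more j ih1 ih2 =>
      rw [sT]
      have : t * t⁻¹ = 1 := mul_inv_cancel₀ ht
      linear_combination (t ^ 2 + t * t⁻¹) * ih2 - t ^ 2 * ih1 + t ^ (2 * j + 2) * this + this
  have fS : ∀ (t : ℂ), t ≠ 0 → ∀ j : ℕ,
      S (j : ℤ) (t + t⁻¹) * (t ^ 2 - 1) * t ^ j = (t ^ (j + 1)) ^ 2 - 1 := by
    intro t ht j
    induction j using Nat.twoStepInduction with
    | zero => simp [hS0]
    | one => simp [hS1]; field_simp; ring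
    | more j ih1 ih2 =>
      rw [sS]
      have : t * t⁻¹ = 1 := mul_inv_cancel₀ ht
      linear_combination (t ^ 2 + t * t⁻¹) * ih2 - t ^ 2 * ih1 + t ^ (2 * j + 4) * this - this
  have mS : ∀ j : ℕ, S (j : ℤ) (-2) = (-1) ^ j * (j + 1) := by
    intro j
    induction j using Nat.twoStepInduction with
    | zero => simp [hS0]
    | one => simp [hS1]; norm_num
    | more j ih1 ih2 =>
      rw [sS, ih1, ih2]; push_cast; ring
  have mT : ∀ j : ℕ, T (j : ℤ) (-2) = (-1) ^ j * 2 := by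
    intro j
    induction j using Nat.twoStepInduction with
    | zero => simp [hT0]
    | one => simp [hT1]
    | more j ih1 ih2 =>
      rw [sT, ih1, ih2]; ring
  -- values on the two families
  have vA : ∀ y, QQ (k + 1) y → S ((k + 1 : ℕ) : ℤ) y = 1 ∧ S (k : ℤ) y = 0 := by
    rintro y ⟨t, ht, ht2, rfl⟩
    have h0 : t ≠ 0 := by rintro rfl; simp at ht
    have h1 := fS t h0 (k + 1)
    have h2 := fS t h0 k
    have h3 : t ^ 2 - 1 ≠ 0 := sub_ne_zero.mpr ht2
    rw [pow_succ t (k + 1), ht] at h1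
    rw [ht] at h2
    constructor
    · apply mul_right_cancel₀ h3
      linear_combination h1
    · have : t ^ k ≠ 0 := pow_ne_zero _ h0
      have h4 : S (k : ℤ) (t + t⁻¹) * ((t ^ 2 - 1) * t ^ k) = 0 := by linear_combination h2
      exact (mul_eq_zero.mp h4).resolve_right (mul_ne_zero h3 this)
  have vB : ∀ y, QQ (k + 3) y → S ((k + 1 : ℕ) : ℤ) y = -1 ∧ S (k : ℤ) y = -y := by
    rintro y ⟨t, ht, ht2, rfl⟩
    have h0 : t ≠ 0 := by rintro rfl; simp at ht
    have h1 := fS t h0 (k + 1)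
    have h2 := fS t h0 k
    have h3 : t ^ 2 - 1 ≠ 0 := sub_ne_zero.mpr ht2
    have hi : t * t⁻¹ = 1 := mul_inv_cancel₀ h0
    have e1 : t ^ (k + 1 + 1) = t⁻¹ := by
      apply mul_left_cancel₀ h0
      rw [hi, ← ht]; ring
    have e2 : t ^ (k + 1) = t⁻¹ ^ 2 := by
      apply mul_left_cancel₀ h0
      rw [← pow_succ', e1]; linear_combination (-t⁻¹) * hi
    have e3 : t ^ k = t⁻¹ ^ 3 := by
      apply mul_left_cancel₀ h0
      rw [← pow_succ', e2]; linear_combination (-t⁻¹ ^ 2) * hi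
    rw [e1, e2] at h1
    rw [e2, e3] at h2
    constructor
    · apply mul_right_cancel₀ h3
      generalize S ((k + 1 : ℕ) : ℤ) (t + t⁻¹) = w at h1 ⊢
      field_simp at h1
      linear_combination h1
    · apply mul_right_cancel₀ h3
      generalize S (k : ℤ) (t + t⁻¹) = w at h2 ⊢
      field_simp at h2
      apply mul_left_cancel₀ h0
      linear_combination h2 + (t ^ 2 - 1) * hi
  obtain ⟨A, hA, cA⟩ := sumA (k + 1) (by omega)
  obtain ⟨B, hB, cB⟩ := sumB (k + 3) (by omega)
  classical
  let M : Finset ℂ := if k % 2 = 1 then {-2} else ∅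
  have hM : ∀ y, y ∈ M ↔ (k % 2 = 1 ∧ y = -2) := by
    intro y
    simp only [M]
    split_ifs with h <;> simp [h]
  have dAB : Disjoint A B := by
    rw [Finset.disjoint_left]
    intro y h1 h2
    have h3 := (vA y ((hA y).1 h1)).1
    rw [(vB y ((hB y).1 h2)).1] at h3
    norm_num at h3
  have dM : Disjoint (A ∪ B) M := by
    rw [Finset.disjoint_left]
    intro y h1 h2
    obtain ⟨_, rfl⟩ := (hM y).1 h2
    rw [Finset.mem_union, hA, hB] at h1
    rcases h1 with h | h <;> exact QQ_ne_neg_two _ h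
  have hQT : ∀ t : ℂ, t ≠ 0 → (T ((k + 2 : ℕ) : ℤ) (t + t⁻¹) = t + t⁻¹ ↔
      t ^ (k + 1) = 1 ∨ t ^ (k + 3) = 1) := by
    intro t h0
    have h1 := fT t h0 (k + 2)
    have hi : t * t⁻¹ = 1 := mul_inv_cancel₀ h0
    have hp : t ^ (k + 2) ≠ 0 := pow_ne_zero _ h0
    have : (T ((k + 2 : ℕ) : ℤ) (t + t⁻¹) - (t + t⁻¹)) * t ^ (k + 2)
        = (t ^ (k + 1) - 1) * (t ^ (k + 3) - 1) := by
      linear_combination h1 - t ^ (k + 1) * hi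
    rw [← sub_eq_zero, ← sub_eq_zero (a := t ^ (k + 1)), ← sub_eq_zero (a := t ^ (k + 3)),
      ← mul_eq_zero, ← this, mul_eq_zero, or_iff_left hp]
  have hY : ∀ y, y ∈ (A ∪ B) ∪ M ↔ (y ≠ 2 ∧ T ((k + 2 : ℕ) : ℤ) y = y) := by
    intro y
    simp only [Finset.mem_union, hA, hB, hM]
    constructor
    · have main : ∀ m, (m = k + 1 ∨ m = k + 3) → QQ m y →
          (y ≠ 2 ∧ T ((k + 2 : ℕ) : ℤ) y = y) := by
        rintro m hm ⟨t, ht, ht2, rfl⟩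
        have h0 : t ≠ 0 := by
          rintro rfl
          rw [zero_pow (by omega)] at ht
          norm_num at ht
        refine ⟨?_, (hQT t h0).2 ?_⟩
        · intro h
          have h1 : (t - 1) ^ 2 = 0 := by field_simp at h; linear_combination h
          have h2 : t = 1 := by
            have := pow_eq_zero_iff (two_ne_zero) |>.mp h1
            linear_combination this
          apply ht2; rw [h2]; norm_num
        · rcases hm with rfl | rfl
          · exact Or.inl ht
          · exact Or.inr ht
      rintro ((h | h) | ⟨h, rfl⟩)
      · exact main _ (Or.inl rfl) h
      · exact main _ (Or.inr rfl) h
      · refine ⟨by norm_num, ?_⟩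
        rw [mT, Odd.neg_one_pow (Nat.odd_iff.mpr (by omega))]; norm_num
    · rintro ⟨h2, hT⟩
      obtain ⟨t, h0, rfl⟩ := exists_t y
      by_cases ht2 : t ^ 2 = 1
      · right
        rcases (mul_self_eq_one_iff.mp ((sq t).symm.trans ht2)) with rfl | rfl
        · exfalso; apply h2; norm_num
        · have e : (-1 : ℂ) + (-1)⁻¹ = -2 := by norm_num
          refine ⟨?_, e⟩
          rw [e, mT] at hT
          by_contra hk
          rw [Even.neg_one_pow (Nat.even_iff.mpr (by omega))] at hT
          norm_num at hT
      · left
        rcases (hQT t h0).1 hT with h | h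
        · exact Or.inl ⟨t, h, ht2, rfl⟩
        · exact Or.inr ⟨t, h, ht2, rfl⟩
  let a : ℂ → ℂ := fun y => S ((k + 1 : ℕ) : ℤ) y * (S ((k + 1 : ℕ) : ℤ) y - S (k : ℤ) y)
  let b : ℂ → ℂ := fun y => -((y + 1) * S ((k + 1 : ℕ) : ℤ) y ^ 2) + S (k : ℤ) y ^ 2
          + 2 * S ((k + 1 : ℕ) : ℤ) y * S (k : ℤ) y
  have aA : ∀ y ∈ A, a y = 1 ∧ b y = -(y + 1) := by
    intro y hy
    obtain ⟨h1, h2⟩ := vA y ((hA y).1 hy)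
    simp only [a, b, h1, h2]
    constructor <;> ring
  have aB : ∀ y ∈ B, a y = 1 - y ∧ b y = y ^ 2 + y - 1 := by
    intro y hy
    obtain ⟨h1, h2⟩ := vB y ((hB y).1 hy)
    simp only [a, b, h1, h2]
    constructor <;> ring
  have aM : ∀ y ∈ M, a y ≠ 0 ∧ b y ≠ 0 := by
    intro y hy
    obtain ⟨hk, rfl⟩ := (hM y).1 hy
    simp only [a, b, mS, pow_succ, Odd.neg_one_pow (Nat.odd_iff.mpr hk)]
    constructor
    · have h : ((k + 2) * (2 * k + 3) : ℂ) ≠ 0 := by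
        exact_mod_cast (by positivity : (k + 2) * (2 * k + 3) ≠ 0)
      intro h'
      apply h
      push_cast at h'
      linear_combination h'
    · push_cast
      ring_nf
      norm_num
  have hset : {p : ℂ × ℂ | p.2 ≠ 2 ∧ T ((k + 2 : ℕ) : ℤ) p.2 = p.2 ∧ Rodd p.1 p.2 = 0}
      = {p : ℂ × ℂ | p.2 ∈ (A ∪ B) ∪ M ∧ a p.2 * p.1 ^ 2 + b p.2 = 0} := by
    ext ⟨x, y⟩
    simp only [Set.mem_ofPred_eq]
    rw [hY, and_assoc, hRodd]
    have : a y * x ^ 2 + b y = -((y + 1) * S ((k + 1 : ℕ) : ℤ) y ^ 2) + S (k : ℤ) y ^ 2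
          + 2 * S ((k + 1 : ℕ) : ℤ) y * S (k : ℤ) y
          + x ^ 2 * S ((k + 1 : ℕ) : ℤ) y * (S ((k + 1 : ℕ) : ℤ) y - S (k : ℤ) y) := by
      simp only [a, b]; ring
    rw [this]
  rw [hset]
  have ht := total ((A ∪ B) ∪ M) a b (by
    intro y hy
    simp only [Finset.mem_union] at hy
    rcases hy with (h | h) | h
    · left; rw [(aA y h).1]; norm_num
    · rw [(aB y h).1, (aB y h).2]
      by_cases hy : y = 1
      · right; rw [hy]; norm_num
      · left; exact sub_ne_zero.mpr (Ne.symm hy)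
    · exact Or.inl (aM y h).1)
  refine ⟨ht.1, ?_⟩
  rw [ht.2, Finset.sum_union dM, Finset.sum_union dAB]
  have s1 : (∑ y ∈ A, if a y = 0 then 0 else if b y = 0 then 1 else 2)
      = ∑ y ∈ A, if y = -1 then 1 else 2 := by
    refine Finset.sum_congr rfl fun y hy => ?_
    rw [(aA y hy).1, (aA y hy).2, if_neg one_ne_zero]
    simp only [neg_eq_zero, add_eq_zero_iff_eq_neg]
  have s2 : (∑ y ∈ B, if a y = 0 then 0 else if b y = 0 then 1 else 2)
      = ∑ y ∈ B, if y = 1 then 0 else if y ^ 2 + y - 1 = 0 then 1 else 2 := by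
    refine Finset.sum_congr rfl fun y hy => ?_
    rw [(aB y hy).1, (aB y hy).2]
    simp only [sub_eq_zero (a := (1 : ℂ)), eq_comm (a := (1 : ℂ))]
  have s3 : (∑ y ∈ M, if a y = 0 then 0 else if b y = 0 then 1 else 2) = 2 * (k % 2) := by
    have : (∑ y ∈ M, if a y = 0 then 0 else if b y = 0 then 1 else 2) = ∑ y ∈ M, 2 := by
      refine Finset.sum_congr rfl fun y hy => ?_
      rw [if_neg (aM y hy).1, if_neg (aM y hy).2]
    rw [this, Finset.sum_const, smul_eq_mul, mul_comm]
    congr 1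
    simp only [M]
    split_ifs with h
    · simp [h]
    · simp; omega
  rw [s1, s2, s3]
  have c1 : (if 3 ∣ k + 1 then 1 else 0) = c := by
    rw [hc]; congr 1; apply propext; omega
  have c2 : (if 6 ∣ k + 3 then 2 else 0) = d := by
    rw [hd]; congr 1; apply propext; omega
  have c3 : (if 5 ∣ k + 3 then 2 else 0) = e := by
    rw [he]; congr 1; apply propext; omega
  rw [c1] at cA
  rw [c2, c3] at cB
  omega
end
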